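/- arXiv:1112.6220 — 2 statements merged into one kernel-verified Lean document; each statement's English description precedes it below -/
import Mathlib

section
/- In the full observation model, for an arbitrary but fixed control strategy g and each i = 1,…,n, define R^i_t = (X^i_t, Z_{1:t}, U_{1:t-1}). Then the process {R^i_t : t = 1,…,T} is a controlled Markov process with control action U^i_t: for every t and every realization with positive probability, P(R^i_{t+1} = r̃^i_{t+1} | R^i_{1:t} = r^i_{1:t}, U^i_{1:t} = u^i_{1:t}) = P(R^i_{t+1} = r̃^i_{t+1} | R^i_t = r^i_t, U^i_t = u^i_t). -/
/-!
The proof is an exchange argument on pairs of sample points. Clearing denominators, the claim reads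
`P(A ∧ B₁) P(B₂) = P(A ∧ B₂) P(B₁)`, where `A` fixes the value of `Rⁱ_{t+1}`, `B₁` conditions
on the whole history `Rⁱ_{1:t}, Uⁱ_{1:t}` and `B₂` on `Rⁱ_t, Uⁱ_t` alone. Both products are sums over pairs `(ω, ω')` of independent copies.

Exchange between `ω` and `ω'` everything primitive that produces the local history of station `i` up
to time `t`: the initial state `Xⁱ_1` and the noises `Wⁱ_s`, `s < t` (`mix`). If `ω` and `ω'` share
the common information `Z_{1:t}, U_{1:t-1}`, the exchange leaves it unchanged, since given that
information the stations evolve separately; its only effect up to time `t` is to exchange the local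
histories `Xⁱ_{1:t}` and `Uⁱ_t` (`mix_spec`). If moreover `Xⁱ_t` and `Uⁱ_t` agree, then `Rⁱ_{t+1}` is
unchanged too, because the noises at time `t` were not touched (`mix_next`). Hence the exchange maps
`(A ∧ B₁) × B₂` onto `(A ∧ B₂) × B₁`. It is an involution and preserves the product weight when the
initial shared states agree (`weight_mix`), so the two products coincide (`Pr_mul_Pr_exchange`).
-/

open scoped Classical

namespace ControlSharing

variable {n T : ℕ}
variable {Z : Type} [Fintype Z] [Nonempty Z]
variable {X : Fin n → Type} [∀ i, Fintype (X i)] [∀ i, Nonempty (X i)]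
variable {U : Fin n → Type} [∀ i, Fintype (U i)] [∀ i, Nonempty (U i)]
variable {W0 : Type} [Fintype W0] [Nonempty W0]
variable {W : Fin n → Type} [∀ i, Fintype (W i)] [∀ i, Nonempty (W i)]

/-- A probability weight function on a finite type. -/
def IsLaw {α : Type} [Fintype α] (P : α → ℝ) : Prop :=
  (∀ a, 0 ≤ P a) ∧ ∑ a, P a = 1

/-- Sample space of primitive random variables: the initial shared state `Z₁`, the initial
local states `X₁ⁱ`, the shared-dynamics noises `W⁰_t` and the local noises `Wⁱ_t`. -/
abbrev Omega (T : ℕ) (Z : Type) (X : Fin n → Type) (W0 : Type) (W : Fin n → Type) : Type :=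
  Z × (∀ i, X i) × (Fin T → W0) × (∀ i, Fin T → W i)

/-- The probability weight of a sample point: `Z₁ ~ P_Z`; conditionally on `Z₁` the initial
local states are independent, `X₁ⁱ ~ P_{Xⁱ|Z}(·|Z₁)`; all noises are independent with laws
`P_{W⁰}`, `P_{Wⁱ}`, independent of the initial states. -/
noncomputable def weight (PZ : Z → ℝ) (PX : ∀ i, Z → X i → ℝ) (PW0 : W0 → ℝ)
    (PW : ∀ i, W i → ℝ) (ω : Omega T Z X W0 W) : ℝ :=
  PZ ω.1 * (∏ i, PX i ω.1 (ω.2.1 i)) * (∏ t, PW0 (ω.2.2.1 t)) *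
    (∏ i, ∏ t, PW i (ω.2.2.2 i t))

/-- A general control strategy: station `i` chooses `Uⁱ_t = gⁱ_t(Z_{1:t}, Xⁱ_{1:t}, U_{1:t-1})`. -/
def Strategy (Z : Type) (X U : Fin n → Type) : Type :=
  ∀ (i : Fin n) (t : ℕ), (Fin (t + 1) → Z) → (Fin (t + 1) → X i) →
    (Fin t → ∀ j, U j) → U i

variable (f0 : ℕ → Z → (∀ j, U j) → W0 → Z)
variable (f : ∀ i, ℕ → Z → X i → (∀ j, U j) → W i → X i)

/-- The closed-loop trajectory: histories `(Z_{1:t+1}, X_{1:t+1}, U_{1:t+1})` generated by the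
dynamics `Z_{t+1} = f⁰_t(Z_t, U_t, W⁰_t)`, `Xⁱ_{t+1} = fⁱ_t(Z_t, Xⁱ_t, U_t, Wⁱ_t)` and the
strategy `g`. -/
noncomputable def traj (g : Strategy Z X U) (ω : Omega T Z X W0 W) :
    (t : ℕ) → (Fin (t + 1) → Z) × (∀ i, Fin (t + 1) → X i) × (Fin (t + 1) → ∀ j, U j)
  | 0 =>
    let zh : Fin 1 → Z := fun _ => ω.1
    let xh : ∀ i, Fin 1 → X i := fun i _ => ω.2.1 i
    ⟨zh, xh, fun _ j => g j 0 zh (xh j) (fun s => s.elim0)⟩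
  | t + 1 =>
    let prev := traj g ω t
    let ucur := prev.2.2 (Fin.last t)
    let znew := f0 t (prev.1 (Fin.last t)) ucur
      (if h : t < T then ω.2.2.1 ⟨t, h⟩ else Classical.arbitrary W0)
    let xnew : ∀ i, X i := fun i =>
      f i t (prev.1 (Fin.last t)) (prev.2.1 i (Fin.last t)) ucur
        (if h : t < T then ω.2.2.2 i ⟨t, h⟩ else Classical.arbitrary (W i))
    let zh : Fin (t + 2) → Z := Fin.snoc prev.1 znew
    let xh : ∀ i, Fin (t + 2) → X i := fun i => Fin.snoc (prev.2.1 i) (xnew i)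
    ⟨zh, xh, Fin.snoc prev.2.2 (fun j => g j (t + 1) zh (xh j) prev.2.2)⟩

/-- The shared state process `Z_t`. -/
noncomputable def Zp (g : Strategy Z X U) (t : ℕ) (ω : Omega T Z X W0 W) : Z :=
  (traj f0 f g ω t).1 (Fin.last t)

/-- The local state process `Xⁱ_t`. -/
noncomputable def Xp (g : Strategy Z X U) (i : Fin n) (t : ℕ) (ω : Omega T Z X W0 W) : X i :=
  (traj f0 f g ω t).2.1 i (Fin.last t)

/-- The action process `Uⁱ_t`. -/
noncomputable def Up (g : Strategy Z X U) (i : Fin n) (t : ℕ) (ω : Omega T Z X W0 W) : U i :=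
  (traj f0 f g ω t).2.2 (Fin.last t) i

/-- Probability of an event under a weight function. -/
noncomputable def Pr {Ω : Type} [Fintype Ω] (μ : Ω → ℝ) (A : Ω → Prop) : ℝ :=
  ∑ ω : Ω, if A ω then μ ω else 0

/-- Conditional probability `P(A | B)`. -/
noncomputable def CondPr {Ω : Type} [Fintype Ω] (μ : Ω → ℝ) (A B : Ω → Prop) : ℝ :=
  Pr μ (fun ω => A ω ∧ B ω) / Pr μ B

/-- Conditional expectation `E[h | B]`. -/
noncomputable def CondExp {Ω : Type} [Fintype Ω] (μ : Ω → ℝ) (h : Ω → ℝ) (B : Ω → Prop) : ℝ :=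
  (∑ ω : Ω, if B ω then μ ω * h ω else 0) / Pr μ B

/-- The expected total cost `J(g) = E[∑_{t=1}^T c_t(Z_t, X_t, U_t)]`. -/
noncomputable def J (c : ℕ → Z → (∀ i, X i) → (∀ i, U i) → ℝ)
    (μ : Omega T Z X W0 W → ℝ) (g : Strategy Z X U) : ℝ :=
  ∑ ω : Omega T Z X W0 W, μ ω *
    ∑ t ∈ Finset.range T,
      c t (Zp f0 f g t ω) (fun i => Xp f0 f g i t ω) (fun i => Up f0 f g i t ω)


/-! ### Recursions for the closed-loop processes -/

section Trajectory

variable (g : Strategy Z X U) (ω : Omega T Z X W0 W)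

lemma traj_Z (t : ℕ) : (traj f0 f g ω t).1 = fun k : Fin (t + 1) => Zp f0 f g k ω := by
  induction t with
  | zero => funext k; fin_cases k; rfl
  | succ t ih =>
    funext k
    refine Fin.lastCases rfl (fun k => ?_) k
    have h : (traj f0 f g ω (t + 1)).1 k.castSucc = (traj f0 f g ω t).1 k := by
      simp [traj]
    rw [h, ih]; rfl

lemma traj_X (t : ℕ) (i : Fin n) :
    (traj f0 f g ω t).2.1 i = fun k : Fin (t + 1) => Xp f0 f g i k ω := by
  induction t with
  | zero => funext k; fin_cases k; rfl
  | succ t ih =>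
    funext k
    refine Fin.lastCases rfl (fun k => ?_) k
    have h : (traj f0 f g ω (t + 1)).2.1 i k.castSucc = (traj f0 f g ω t).2.1 i k := by
      simp [traj]
    rw [h, ih]; rfl

lemma traj_U (t : ℕ) :
    (traj f0 f g ω t).2.2 = fun (k : Fin (t + 1)) j => Up f0 f g j k ω := by
  induction t with
  | zero => funext k; fin_cases k; rfl
  | succ t ih =>
    funext k
    refine Fin.lastCases rfl (fun k => ?_) k
    have h : (traj f0 f g ω (t + 1)).2.2 k.castSucc = (traj f0 f g ω t).2.2 k := by
      simp [traj]
    rw [h, ih]; rfl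

lemma Zp_succ (t : ℕ) : Zp f0 f g (t + 1) ω = f0 t (Zp f0 f g t ω) (fun j => Up f0 f g j t ω)
    (if h : t < T then ω.2.2.1 ⟨t, h⟩ else Classical.arbitrary W0) := by
  simp only [Zp, traj, Fin.snoc_last]; rfl

lemma Xp_succ (t : ℕ) (i : Fin n) : Xp f0 f g i (t + 1) ω =
    f i t (Zp f0 f g t ω) (Xp f0 f g i t ω) (fun j => Up f0 f g j t ω)
    (if h : t < T then ω.2.2.2 i ⟨t, h⟩ else Classical.arbitrary (W i)) := by
  simp only [Xp, traj, Fin.snoc_last]; rfl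

lemma Up_eq (t : ℕ) (i : Fin n) : Up f0 f g i t ω =
    g i t (fun k : Fin (t + 1) => Zp f0 f g k ω) (fun k : Fin (t + 1) => Xp f0 f g i k ω)
      (fun (k : Fin t) j => Up f0 f g j k ω) := by
  cases t with
  | zero =>
    have h : (fun (k : Fin 0) j => Up f0 f g j k ω) = fun s => s.elim0 := by
      funext k; exact k.elim0
    have hz : (fun k : Fin 1 => Zp f0 f g k ω) = fun _ => ω.1 := by
      funext k; fin_cases k; rfl
    have hx : (fun k : Fin 1 => Xp f0 f g i k ω) = fun _ => ω.2.1 i := by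
      funext k; fin_cases k; rfl
    rw [h]
    erw [hz, hx]
    rfl
  | succ t =>
    rw [← traj_Z, ← traj_X, ← traj_U]
    simp only [Up, traj, Fin.snoc_last]

end Trajectory

/-! ### Exchanging the primitives of one station -/

/-- The sample point `ω` with the initial local state of station `i` and its noises before time `t`
replaced by those of `ω'`. -/
noncomputable def mix (i : Fin n) (t : ℕ) (ω ω' : Omega T Z X W0 W) : Omega T Z X W0 W :=
  (ω.1, fun j => if j = i then ω'.2.1 j else ω.2.1 j, ω.2.2.1,
    fun j s => if j = i ∧ (s : ℕ) < t then ω'.2.2.2 j s else ω.2.2.2 j s)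

lemma mix_mix (i : Fin n) (t : ℕ) (ω ω' : Omega T Z X W0 W) :
    mix i t (mix i t ω ω') (mix i t ω' ω) = ω := by
  refine Prod.ext rfl (Prod.ext ?_ (Prod.ext rfl ?_))
  · funext j
    by_cases h : j = i <;> simp [mix, h]
  · funext j s
    by_cases h : j = i ∧ (s : ℕ) < t <;> simp [mix, h]

/-- The exchange preserves the product weight. Equality of the initial shared states is needed
because the initial local states are drawn conditionally on them. -/
lemma weight_mix (PZ : Z → ℝ) (PX : ∀ i, Z → X i → ℝ) (PW0 : W0 → ℝ) (PW : ∀ i, W i → ℝ)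
    (i : Fin n) (t : ℕ) (ω ω' : Omega T Z X W0 W) (h : ω.1 = ω'.1) :
    weight PZ PX PW0 PW (mix i t ω ω') * weight PZ PX PW0 PW (mix i t ω' ω) =
      weight PZ PX PW0 PW ω * weight PZ PX PW0 PW ω' := by
  have hx : (∏ j, PX j ω'.1 ((mix i t ω ω').2.1 j)) * (∏ j, PX j ω'.1 ((mix i t ω' ω).2.1 j)) =
      (∏ j, PX j ω'.1 (ω.2.1 j)) * (∏ j, PX j ω'.1 (ω'.2.1 j)) := by
    simp only [← Finset.prod_mul_distrib]
    refine Finset.prod_congr rfl fun j _ => ?_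
    by_cases hj : j = i <;> simp [mix, hj, mul_comm]
  have hw : (∏ j, ∏ s, PW j ((mix i t ω ω').2.2.2 j s)) *
        (∏ j, ∏ s, PW j ((mix i t ω' ω).2.2.2 j s)) =
      (∏ j, ∏ s, PW j (ω.2.2.2 j s)) * (∏ j, ∏ s, PW j (ω'.2.2.2 j s)) := by
    simp only [← Finset.prod_mul_distrib]
    refine Finset.prod_congr rfl fun j _ => Finset.prod_congr rfl fun s _ => ?_
    by_cases hj : j = i ∧ (s : ℕ) < t <;> simp [mix, hj, mul_comm]
  have e1 : (mix i t ω ω').1 = ω'.1 := h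
  have e2 : (mix i t ω' ω).1 = ω'.1 := rfl
  have e3 : (mix i t ω ω').2.2.1 = ω.2.2.1 := rfl
  have e4 : (mix i t ω' ω).2.2.1 = ω'.2.2.1 := rfl
  unfold weight
  rw [e1, e2, e3, e4, h]
  linear_combination (PZ ω'.1 * PZ ω'.1 * (∏ s, PW0 (ω.2.2.1 s)) * (∏ s, PW0 (ω'.2.2.1 s))) *
    ((∏ j, ∏ s, PW j ((mix i t ω ω').2.2.2 j s)) *
      (∏ j, ∏ s, PW j ((mix i t ω' ω).2.2.2 j s)) * hx +
    (∏ j, PX j ω'.1 (ω.2.1 j)) * (∏ j, PX j ω'.1 (ω'.2.1 j)) * hw)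

/-- Two sample points have the same common information `Z_{1:t}, U_{1:t-1}`. -/
def SameInfo (g : Strategy Z X U) (t : ℕ) (ω ω' : Omega T Z X W0 W) : Prop :=
  (∀ s ≤ t, Zp f0 f g s ω = Zp f0 f g s ω') ∧ ∀ s < t, ∀ j, Up f0 f g j s ω = Up f0 f g j s ω'

/-- Up to time `t`, exchanging the primitives of station `i` between sample points with the same
common information replaces the local history of station `i` and changes nothing else. -/
lemma mix_spec (g : Strategy Z X U) (i : Fin n) (t : ℕ) (ω ω' : Omega T Z X W0 W)
    (hc : SameInfo f0 f g t ω ω') (s : ℕ) (hs : s ≤ t) :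
    Zp f0 f g s (mix i t ω ω') = Zp f0 f g s ω ∧
    (∀ j, Xp f0 f g j s (mix i t ω ω') = if j = i then Xp f0 f g j s ω' else Xp f0 f g j s ω) ∧
    (∀ j, Up f0 f g j s (mix i t ω ω') =
      if j = i then Up f0 f g j s ω' else Up f0 f g j s ω) := by
  obtain ⟨hZ, hU⟩ := hc
  induction s using Nat.strong_induction_on with
  | _ s ih =>
    have hUlt : ∀ k < s, ∀ j, Up f0 f g j k (mix i t ω ω') = Up f0 f g j k ω := by
      intro k hk j
      rw [(ih k hk (by omega)).2.2 j, ← hU k (by omega) j, ite_self]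
    have hstate : Zp f0 f g s (mix i t ω ω') = Zp f0 f g s ω ∧
        ∀ j, Xp f0 f g j s (mix i t ω ω') =
          if j = i then Xp f0 f g j s ω' else Xp f0 f g j s ω := by
      cases s with
      | zero => exact ⟨rfl, fun j => rfl⟩
      | succ s =>
        obtain ⟨h1, h2, -⟩ := ih s (by omega) (by omega)
        have h3 : (fun j => Up f0 f g j s (mix i t ω ω')) = fun j => Up f0 f g j s ω :=
          funext fun j => hUlt s (by omega) j
        refine ⟨?_, fun j => ?_⟩
        · rw [Zp_succ, Zp_succ, h1, h3]; rfl
        · have h4 : (fun j => Up f0 f g j s ω) = fun j => Up f0 f g j s ω' :=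
            funext fun j => hU s (by omega) j
          rw [Xp_succ, Xp_succ, Xp_succ, h1, h3, h2, ← h4, ← hZ s (by omega)]
          have hst : s < t := by omega
          by_cases hj : j = i <;> simp [mix, hj, hst]
    refine ⟨hstate.1, hstate.2, fun j => ?_⟩
    have hZs : ∀ k ≤ s, Zp f0 f g k (mix i t ω ω') = Zp f0 f g k ω := by
      intro k hk
      rcases hk.lt_or_eq with hk | rfl
      · exact (ih k hk (by omega)).1
      · exact hstate.1
    have hXs : ∀ k ≤ s, Xp f0 f g j k (mix i t ω ω') =
        if j = i then Xp f0 f g j k ω' else Xp f0 f g j k ω := by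
      intro k hk
      rcases hk.lt_or_eq with hk | rfl
      · exact (ih k hk (by omega)).2.1 j
      · exact hstate.2 j
    have a1 : (fun k : Fin (s + 1) => Zp f0 f g k (mix i t ω ω')) =
        fun k : Fin (s + 1) => Zp f0 f g k ω :=
      funext fun k => hZs k (by omega)
    have a2 : (fun k : Fin (s + 1) => Xp f0 f g j k (mix i t ω ω')) =
        fun k : Fin (s + 1) => if j = i then Xp f0 f g j k ω' else Xp f0 f g j k ω :=
      funext fun k => hXs k (by omega)
    have a3 : (fun (k : Fin s) j => Up f0 f g j k (mix i t ω ω')) =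
        fun (k : Fin s) j => Up f0 f g j k ω :=
      funext fun k => funext fun j => hUlt k (by omega) j
    have a4 : (fun k : Fin (s + 1) => Zp f0 f g k ω) =
        fun k : Fin (s + 1) => Zp f0 f g k ω' :=
      funext fun k => hZ k (by omega)
    have a5 : (fun (k : Fin s) j => Up f0 f g j k ω) =
        fun (k : Fin s) j => Up f0 f g j k ω' :=
      funext fun k => funext fun j => hU k (by omega) j
    rw [Up_eq, a1, a2, a3]
    by_cases hj : j = i
    · simp only [hj, if_true]
      rw [Up_eq f0 f g ω', a4, a5]
    · simp only [hj, if_false]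
      rw [Up_eq f0 f g ω]

/-- If the current local state and action of station `i` also agree, the exchange does not affect
`Rⁱ_{t+1}`: the noises at time `t` are those of `ω`. -/
lemma mix_next (g : Strategy Z X U) (i : Fin n) (t : ℕ) (ω ω' : Omega T Z X W0 W)
    (hc : SameInfo f0 f g t ω ω') (hx : Xp f0 f g i t ω = Xp f0 f g i t ω')
    (hu : Up f0 f g i t ω = Up f0 f g i t ω') :
    Xp f0 f g i (t + 1) (mix i t ω ω') = Xp f0 f g i (t + 1) ω ∧
    (∀ s ≤ t + 1, Zp f0 f g s (mix i t ω ω') = Zp f0 f g s ω) ∧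
    (∀ s ≤ t, ∀ j, Up f0 f g j s (mix i t ω ω') = Up f0 f g j s ω) := by
  have hU : ∀ s ≤ t, ∀ j, Up f0 f g j s (mix i t ω ω') = Up f0 f g j s ω := by
    intro s hs j
    rw [(mix_spec f0 f g i t ω ω' hc s hs).2.2 j]
    split_ifs with hj
    · subst hj
      rcases hs.lt_or_eq with hs | rfl
      · exact (hc.2 s hs j).symm
      · exact hu.symm
    · rfl
  obtain ⟨h1, h2, -⟩ := mix_spec f0 f g i t ω ω' hc t le_rfl
  have h3 : (fun j => Up f0 f g j t (mix i t ω ω')) = fun j => Up f0 f g j t ω :=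
    funext fun j => hU t le_rfl j
  refine ⟨?_, fun s hs => ?_, hU⟩
  · rw [Xp_succ, Xp_succ, h1, h3, h2, if_pos rfl, ← hx]
    simp [mix]
  · rcases hs.lt_or_eq with hs | rfl
    · exact (mix_spec f0 f g i t ω ω' hc s (by omega)).1
    · rw [Zp_succ, Zp_succ, h1, h3]; rfl

/-! ### Exchange principle and the controlled Markov property -/

/-- If `(ω, ω') ↦ (c ω ω', c ω' ω)` is an involution that carries `P × Q` to `P' × Q'` and back,
preserving the product weight on `P × Q`, then the two product events have equal probability. -/
lemma Pr_mul_Pr_exchange {Ω : Type} [Fintype Ω] (μ : Ω → ℝ) (c : Ω → Ω → Ω)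
    (hc : ∀ a b, c (c a b) (c b a) = a) (P Q P' Q' : Ω → Prop)
    (hμ : ∀ a b, P a → Q b → μ (c a b) * μ (c b a) = μ a * μ b)
    (h : ∀ a b, P a → Q b → P' (c a b) ∧ Q' (c b a))
    (h' : ∀ a b, P' a → Q' b → P (c a b) ∧ Q (c b a)) :
    Pr μ P * Pr μ Q = Pr μ P' * Pr μ Q' := by
  unfold Pr
  rw [Fintype.sum_mul_sum, Fintype.sum_mul_sum, ← Fintype.sum_prod_type', ← Fintype.sum_prod_type']
  have hinv : Function.Involutive fun p : Ω × Ω => (c p.1 p.2, c p.2 p.1) :=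
    fun p => Prod.ext (hc _ _) (hc _ _)
  refine Fintype.sum_equiv hinv.toPerm _ _ fun ⟨a, b⟩ => ?_
  change (if P a then μ a else 0) * (if Q b then μ b else 0) =
    (if P' (c a b) then μ (c a b) else 0) * (if Q' (c b a) then μ (c b a) else 0)
  rw [ite_zero_mul_ite_zero, ite_zero_mul_ite_zero]
  by_cases hab : P a ∧ Q b
  · rw [if_pos hab, if_pos (h a b hab.1 hab.2), hμ a b hab.1 hab.2]
  · rw [if_neg hab, if_neg fun hab' => hab ?_]
    simpa only [hc] using h' _ _ hab'.1 hab'.2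

/-- Lemma 1, part 1: in the full observation model, for an arbitrary but
fixed control strategy `g`, the process `Rⁱ_t = (Xⁱ_t, Z_{1:t}, U_{1:t-1})` is a controlled
Markov process with control action `Uⁱ_t`: for every realization of positive probability,
`P(Rⁱ_{t+1} = r̃ⁱ_{t+1} | Rⁱ_{1:t} = rⁱ_{1:t}, Uⁱ_{1:t} = uⁱ_{1:t})
  = P(Rⁱ_{t+1} = r̃ⁱ_{t+1} | Rⁱ_t = rⁱ_t, Uⁱ_t = uⁱ_t)`.
Conditioning on `Rⁱ_{1:t} = rⁱ_{1:t}, Uⁱ_{1:t} = uⁱ_{1:t}` fixes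
`(Xⁱ_{1:t}, Z_{1:t}, U_{1:t-1}, Uⁱ_{1:t})`, while conditioning on `Rⁱ_t = rⁱ_t, Uⁱ_t = uⁱ_t`
fixes `(Xⁱ_t, Z_{1:t}, U_{1:t-1}, Uⁱ_t)`; the realization `r̃ⁱ_{t+1}` is
`(x̃ⁱ, z̃_{1:t+1}, ũ_{1:t})`. -/
theorem full_obs_controlled_markov
    (PZ : Z → ℝ) (PX : ∀ i, Z → X i → ℝ) (PW0 : W0 → ℝ) (PW : ∀ i, W i → ℝ)
    (hPZ : IsLaw PZ) (hPX : ∀ i z, IsLaw (PX i z))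
    (hPW0 : IsLaw PW0) (hPW : ∀ i, IsLaw (PW i))
    (g : Strategy Z X U) (i : Fin n)
    (t : ℕ) (ht : t + 1 < T)
    (xi : ℕ → X i) (z : ℕ → Z) (u : ℕ → ∀ j, U j) (ui : ℕ → U i)
    (xt : X i) (zt : ℕ → Z) (ut : ℕ → ∀ j, U j)
    (hpos1 : 0 < Pr (weight (T := T) PZ PX PW0 PW)
      (fun ω => (∀ s ≤ t, Xp f0 f g i s ω = xi s) ∧ (∀ s ≤ t, Zp f0 f g s ω = z s) ∧
        (∀ s < t, ∀ j, Up f0 f g j s ω = u s j) ∧ (∀ s ≤ t, Up f0 f g i s ω = ui s)))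
    (hpos2 : 0 < Pr (weight (T := T) PZ PX PW0 PW)
      (fun ω => Xp f0 f g i t ω = xi t ∧ (∀ s ≤ t, Zp f0 f g s ω = z s) ∧
        (∀ s < t, ∀ j, Up f0 f g j s ω = u s j) ∧ Up f0 f g i t ω = ui t)) :
    CondPr (weight (T := T) PZ PX PW0 PW)
        (fun ω => Xp f0 f g i (t + 1) ω = xt ∧ (∀ s ≤ t + 1, Zp f0 f g s ω = zt s) ∧
          (∀ s ≤ t, ∀ j, Up f0 f g j s ω = ut s j))
        (fun ω => (∀ s ≤ t, Xp f0 f g i s ω = xi s) ∧ (∀ s ≤ t, Zp f0 f g s ω = z s) ∧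
          (∀ s < t, ∀ j, Up f0 f g j s ω = u s j) ∧ (∀ s ≤ t, Up f0 f g i s ω = ui s)) =
      CondPr (weight (T := T) PZ PX PW0 PW)
        (fun ω => Xp f0 f g i (t + 1) ω = xt ∧ (∀ s ≤ t + 1, Zp f0 f g s ω = zt s) ∧
          (∀ s ≤ t, ∀ j, Up f0 f g j s ω = ut s j))
        (fun ω => Xp f0 f g i t ω = xi t ∧ (∀ s ≤ t, Zp f0 f g s ω = z s) ∧
          (∀ s < t, ∀ j, Up f0 f g j s ω = u s j) ∧ Up f0 f g i t ω = ui t) := by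
  rw [CondPr, CondPr, div_eq_div_iff hpos1.ne' hpos2.ne']
  -- Either conditioning event pins the common information.
  have info : ∀ ω ω' : Omega T Z X W0 W,
      ((∀ s ≤ t, Zp f0 f g s ω = z s) ∧ (∀ s < t, ∀ j, Up f0 f g j s ω = u s j)) →
      ((∀ s ≤ t, Zp f0 f g s ω' = z s) ∧ (∀ s < t, ∀ j, Up f0 f g j s ω' = u s j)) →
      SameInfo f0 f g t ω ω' := fun ω ω' h h' =>
    ⟨fun s hs => (h.1 s hs).trans (h'.1 s hs).symm,
      fun s hs j => (h.2 s hs j).trans (h'.2 s hs j).symm⟩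
  refine Pr_mul_Pr_exchange _ (mix i t) (mix_mix i t) _ _ _ _ ?_ ?_ ?_
  · rintro a b ⟨-, -, hz, -, -⟩ ⟨-, hz', -, -⟩
    -- `Z_1` is the first primitive variable, so agreement of `Z` at time `0` is what is needed.
    exact weight_mix PZ PX PW0 PW i t a b ((hz 0 t.zero_le).trans (hz' 0 t.zero_le).symm)
  · rintro a b ⟨⟨hA1, hA2, hA3⟩, hx, hz, hu, hui⟩ ⟨hx', hz', hu', hui'⟩
    have hc := info a b ⟨hz, hu⟩ ⟨hz', hu'⟩
    have hc' := info b a ⟨hz', hu'⟩ ⟨hz, hu⟩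
    have ab := mix_spec f0 f g i t a b hc
    have ba := mix_spec f0 f g i t b a hc'
    obtain ⟨n1, n2, n3⟩ := mix_next f0 f g i t a b hc ((hx t le_rfl).trans hx'.symm)
      ((hui t le_rfl).trans hui'.symm)
    obtain ⟨m1, m2, m3⟩ := mix_next f0 f g i t b a hc' (hx'.trans (hx t le_rfl).symm)
      (hui'.trans (hui t le_rfl).symm)
    refine ⟨⟨⟨n1.trans hA1, fun s hs => (n2 s hs).trans (hA2 s hs),
      fun s hs j => (n3 s hs j).trans (hA3 s hs j)⟩, ?_, fun s hs => (ab s hs).1.trans (hz s hs),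
      fun s hs j => (n3 s hs.le j).trans (hu s hs j), ?_⟩, fun s hs => ?_,
      fun s hs => (ba s hs).1.trans (hz' s hs),
      fun s hs j => (m3 s hs.le j).trans (hu' s hs j), fun s hs => ?_⟩
    · rw [(ab t le_rfl).2.1, if_pos rfl, hx']
    · rw [(ab t le_rfl).2.2, if_pos rfl, hui']
    · rw [(ba s hs).2.1, if_pos rfl, hx s hs]
    · rw [(ba s hs).2.2, if_pos rfl, hui s hs]
  · rintro a b ⟨⟨hA1, hA2, hA3⟩, hx', hz', hu', hui'⟩ ⟨hx, hz, hu, hui⟩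
    have hc := info a b ⟨hz', hu'⟩ ⟨hz, hu⟩
    have hc' := info b a ⟨hz, hu⟩ ⟨hz', hu'⟩
    have ab := mix_spec f0 f g i t a b hc
    have ba := mix_spec f0 f g i t b a hc'
    obtain ⟨n1, n2, n3⟩ := mix_next f0 f g i t a b hc (hx'.trans (hx t le_rfl).symm)
      (hui'.trans (hui t le_rfl).symm)
    obtain ⟨m1, m2, m3⟩ := mix_next f0 f g i t b a hc' ((hx t le_rfl).trans hx'.symm)
      ((hui t le_rfl).trans hui'.symm)
    refine ⟨⟨⟨n1.trans hA1, fun s hs => (n2 s hs).trans (hA2 s hs),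
      fun s hs j => (n3 s hs j).trans (hA3 s hs j)⟩, fun s hs => ?_,
      fun s hs => (ab s hs).1.trans (hz' s hs),
      fun s hs j => (n3 s hs.le j).trans (hu' s hs j), fun s hs => ?_⟩, ?_,
      fun s hs => (ba s hs).1.trans (hz s hs),
      fun s hs j => (m3 s hs.le j).trans (hu s hs j), ?_⟩
    · rw [(ab s hs).2.1, if_pos rfl, hx s hs]
    · rw [(ab s hs).2.2, if_pos rfl, hui s hs]
    · rw [(ba t le_rfl).2.1, if_pos rfl, hx']
    · rw [(ba t le_rfl).2.2, if_pos rfl, hui']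

end ControlSharing
end

section
/- In the full observation model, restricting attention to control laws of the form U^i_t = g̃^i_t(X^i_t, Z_t, Θ_t) at all control stations i = 1,…,n is without loss of optimality, where Θ_t = (Θ^1_t,…,Θ^n_t) with Θ^i_t(x) = P(X^i_t = x | Z_{1:t}, U_{1:t-1}): for every strategy g of the general form U^i_t = g^i_t(Z_{1:t}, X^i_{1:t}, U_{1:t-1}) there exists a strategy g̃ of the stated form with J(g̃) ≤ J(g). -/
/-!
Given the common information `(Z_{1:t}, U_{1:t-1})`, the local histories of the subsystems are
independent under every strategy: the probability of a history is a factor `pub` times one factor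
`priv i` per subsystem (`law_hist`, by induction on `t`, resampling the noises of one time step).
Hence the current state of subsystem `i` has a conditional law `a i` proportional to `marg i`, and
one step of control transforms these unnormalised laws linearly, through the joint measure
`b i` of the current local state and action.

Dynamic programming on the pairs `(z, a)` defines `value`, a minimum over deterministic profiles
of decision rules. A general strategy also uses past local states; given the common information and
the current local state these amount to private randomisation, so `b i` may be any nonnegative
measure with marginal `a i`. As a minimum of multilinear functions, `value` is concave in each
`a i` (`value_concave`); the one-step cost is therefore concave in each `b i`, and is minimised at
a deterministic decision rule (`exists_det_le`, `value_le_stage`). Summing over the common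
information and over time, `value` at time zero bounds the cost of every strategy from below
(`potential_le_sum`).

The bound is attained by `optStrategy`, which applies a minimising profile at the current shared
state and *normalised* beliefs. It is also a minimiser at the unnormalised ones, because `value` is
homogeneous in each belief (`value_smul`). Finally, the normalised beliefs are the conditional laws
`Theta` wherever the realisation has positive probability (`Theta_eq`).
-/

open scoped Classical

namespace ControlSharing

variable {n T : ℕ}
variable {Z : Type} [Fintype Z] [Nonempty Z]
variable {X : Fin n → Type} [∀ i, Fintype (X i)] [∀ i, Nonempty (X i)]
variable {U : Fin n → Type} [∀ i, Fintype (U i)] [∀ i, Nonempty (U i)]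
variable {W0 : Type} [Fintype W0] [Nonempty W0]
variable {W : Fin n → Type} [∀ i, Fintype (W i)] [∀ i, Nonempty (W i)]

variable (f0 : ℕ → Z → (∀ j, U j) → W0 → Z)
variable (f : ∀ i, ℕ → Z → X i → (∀ j, U j) → W i → X i)

/-- A coordinator-form strategy: `Uⁱ_t = Dⁱ_t(Xⁱ_t)` where the decision rule
`Dⁱ_t : 𝒳ⁱ → 𝒰ⁱ` is a function of the common information `C_t = (Z_{1:t}, U_{1:t-1})`. -/
def CoordStrategy (Z : Type) (X U : Fin n → Type) : Type :=
  ∀ (i : Fin n) (t : ℕ), (Fin (t + 1) → Z) → (Fin t → ∀ j, U j) → (X i → U i)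

/-- The control strategy induced by a coordinator-form strategy. -/
def ofCoord (d : CoordStrategy Z X U) : Strategy Z X U :=
  fun i t zh xh uh => d i t zh uh (xh (Fin.last t))

/-- The belief `Θⁱ_t` of the coordinator: the conditional distribution of the local state
`Xⁱ_t` given the common information `C_t = (Z_{1:t}, U_{1:t-1})` realized at `ω`. -/
noncomputable def Theta (μ : Omega T Z X W0 W → ℝ) (g : Strategy Z X U) (i : Fin n) (t : ℕ)
    (ω : Omega T Z X W0 W) : X i → ℝ := fun x =>
  CondPr μ (fun ω' => Xp f0 f g i t ω' = x)
    (fun ω' => (∀ s ≤ t, Zp f0 f g s ω' = Zp f0 f g s ω) ∧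
      (∀ s < t, ∀ j, Up f0 f g j s ω' = Up f0 f g j s ω))

/-- The realized decision rule `Dⁱ_t` (prescribed by the coordinator-form strategy `d`)
along the trajectory at `ω`. -/
noncomputable def Dp (d : CoordStrategy Z X U) (i : Fin n) (t : ℕ)
    (ω : Omega T Z X W0 W) : X i → U i :=
  d i t (fun s : Fin (t + 1) => Zp f0 f (ofCoord d) s ω)
    (fun (s : Fin t) (j : Fin n) => Up f0 f (ofCoord d) j s ω)

set_option linter.unusedSectionVars false

/-! ### The dynamic program on pairs (shared state, unnormalised local beliefs) -/

section DynamicProgram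

variable (c : ℕ → Z → (∀ i, X i) → (∀ i, U i) → ℝ)
variable (K0 : ℕ → Z → (∀ j, U j) → Z → ℝ)
variable (K : ∀ i, ℕ → Z → X i → (∀ j, U j) → X i → ℝ)

/-- One step of the dynamic program, with terminal value `V` after the step: the product measure
with factors `b i` on `X i × U i` (written in curried form) is the unnormalised law of local states
and actions. The continuation is evaluated at the unnormalised laws of the next local states,
restricted to the event that the publicly observed action is `u`. -/
noncomputable def stage (t : ℕ) (V : Z → (∀ i, X i → ℝ) → ℝ) (z : Z)
    (b : ∀ i, X i → U i → ℝ) : ℝ :=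
  (∑ y : ∀ i, X i × U i, (∏ i, b i (y i).1 (y i).2) *
      c t z (fun i => (y i).1) (fun i => (y i).2)) +
    ∑ u : ∀ i, U i, ∑ z', K0 t z u z' *
      V z' (fun i xn => ∑ x, b i x (u i) * K i t z x u xn)

/-- The joint measure of state and action when the state has measure `a` and the action is
chosen by the decision rule `d`. -/
noncomputable def detJoint {A B : Type} (d : A → B) (a : A → ℝ) : A → B → ℝ :=
  fun x u => if d x = u then a x else 0

/-- The optimal cost over `k` remaining stages, starting at time `t`. -/
noncomputable def value : ℕ → ℕ → Z → (∀ i, X i → ℝ) → ℝ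
  | 0, _ => fun _ _ => 0
  | k + 1, t => fun z a =>
    Finset.univ.inf' Finset.univ_nonempty fun d : ∀ i, X i → U i =>
      stage c K0 K t (value k (t + 1)) z (fun i => detJoint (d i) (a i))

lemma value_succ_le (k t : ℕ) (z : Z) (a : ∀ i, X i → ℝ) (d : ∀ i, X i → U i) :
    value c K0 K (k + 1) t z a ≤
      stage c K0 K t (value c K0 K k (t + 1)) z (fun i => detJoint (d i) (a i)) :=
  Finset.inf'_le _ (Finset.mem_univ d)

lemma exists_value_succ_eq (k t : ℕ) (z : Z) (a : ∀ i, X i → ℝ) :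
    ∃ d : ∀ i, X i → U i, value c K0 K (k + 1) t z a =
      stage c K0 K t (value c K0 K k (t + 1)) z (fun i => detJoint (d i) (a i)) := by
  obtain ⟨d, -, hd⟩ := Finset.exists_mem_eq_inf' (Finset.univ_nonempty (α := ∀ i, X i → U i))
    (fun d => stage c K0 K t (value c K0 K k (t + 1)) z (fun i => detJoint (d i) (a i)))
  exact ⟨d, hd⟩

lemma stage_smul {V : Z → (∀ i, X i → ℝ) → ℝ} (t : ℕ) (z : Z) (r : Fin n → ℝ)
    (hV : ∀ z a, V z (fun i x => r i * a i x) = (∏ i, r i) * V z a)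
    (b : ∀ i, X i → U i → ℝ) :
    stage c K0 K t V z (fun i x u => r i * b i x u) = (∏ i, r i) * stage c K0 K t V z b := by
  unfold stage
  rw [mul_add, Finset.mul_sum, Finset.mul_sum]
  congr 1
  · refine Finset.sum_congr rfl fun y _ => ?_
    rw [Finset.prod_mul_distrib, mul_assoc]
  · refine Finset.sum_congr rfl fun u _ => ?_
    rw [Finset.mul_sum]
    refine Finset.sum_congr rfl fun z' _ => ?_
    rw [mul_left_comm, ← hV]
    simp only [Finset.mul_sum, mul_assoc]

lemma detJoint_mul {A B : Type} (d : A → B) (r : ℝ) (a : A → ℝ) :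
    detJoint d (fun x => r * a x) = fun x u => r * detJoint d a x u := by
  funext x u; simp [detJoint]

/-- The value function is positively homogeneous in each belief separately. -/
lemma value_smul (k t : ℕ) (z : Z) (r : Fin n → ℝ) (hr : ∀ i, 0 ≤ r i) (a : ∀ i, X i → ℝ) :
    value c K0 K k t z (fun i x => r i * a i x) = (∏ i, r i) * value c K0 K k t z a := by
  induction k generalizing t z a with
  | zero => simp [value]
  | succ k ih =>
    have hP : 0 ≤ ∏ i, r i := Finset.prod_nonneg fun i _ => hr i
    have key : ∀ d : ∀ i, X i → U i,
        stage c K0 K t (value c K0 K k (t + 1)) z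
          (fun i => detJoint (d i) (fun x => r i * a i x)) =
        (∏ i, r i) * stage c K0 K t (value c K0 K k (t + 1)) z
          (fun i => detJoint (d i) (a i)) := by
      intro d
      rw [← stage_smul c K0 K t z r (fun z a => ih (t + 1) z a)]
      congr 1
      funext i
      exact detJoint_mul _ _ _
    apply le_antisymm
    · obtain ⟨d, hd⟩ := exists_value_succ_eq c K0 K k t z a
      rw [hd, ← key]
      exact value_succ_le c K0 K k t z _ d
    · obtain ⟨d, hd⟩ := exists_value_succ_eq c K0 K k t z (fun i x => r i * a i x)
      rw [hd, key]
      exact mul_le_mul_of_nonneg_left (value_succ_le c K0 K k t z a d) hP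

lemma stage_concave {V : Z → (∀ i, X i → ℝ) → ℝ} (hK0 : ∀ t z u z', 0 ≤ K0 t z u z')
    (hV : ∀ z a i, ConcaveOn ℝ Set.univ (fun v => V z (Function.update a i v)))
    (t : ℕ) (z : Z) (b : ∀ i, X i → U i → ℝ) (i : Fin n) :
    ConcaveOn ℝ Set.univ (fun v => stage c K0 K t V z (Function.update b i v)) := by
  unfold stage
  refine ConcaveOn.add ?_ ?_
  · refine ⟨convex_univ, fun v _ w _ p q _ _ _ => le_of_eq ?_⟩
    simp only [smul_eq_mul, Finset.mul_sum]
    rw [← Finset.sum_add_distrib]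
    refine Finset.sum_congr rfl fun y _ => ?_
    have h : ∀ v : X i → U i → ℝ, (∏ j, Function.update b i v j (y j).1 (y j).2) =
        v (y i).1 (y i).2 * ∏ j ∈ Finset.univ.erase i, b j (y j).1 (y j).2 := by
      intro v
      rw [← Finset.mul_prod_erase _ _ (Finset.mem_univ i), Function.update_self]
      congr 1
      refine Finset.prod_congr rfl fun j hj => ?_
      rw [Function.update_of_ne (Finset.ne_of_mem_erase hj)]
    rw [h, h, h]
    simp only [Pi.add_apply, Pi.smul_apply, smul_eq_mul]
    ring
  · refine ⟨convex_univ, fun v _ w _ p q hp hq hpq => ?_⟩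
    simp only [smul_eq_mul, Finset.mul_sum]
    rw [← Finset.sum_add_distrib]
    refine Finset.sum_le_sum fun u _ => ?_
    rw [← Finset.sum_add_distrib]
    refine Finset.sum_le_sum fun z' _ => ?_
    have h : ∀ v : X i → U i → ℝ,
        (fun j x' => ∑ x, Function.update b i v j x (u j) * K j t z x u x') =
        Function.update (fun j x' => ∑ x, b j x (u j) * K j t z x u x') i
          (fun x' => ∑ x, v x (u i) * K i t z x u x') := by
      intro v
      funext j
      by_cases hj : j = i
      · subst hj; simp
      · simp [Function.update_of_ne hj]
    rw [h, h, h]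
    have h2 : (fun x' => ∑ x, (p • v + q • w) x (u i) * K i t z x u x') =
        p • (fun x' => ∑ x, v x (u i) * K i t z x u x') +
        q • (fun x' => ∑ x, w x (u i) * K i t z x u x') := by
      funext x'
      simp only [Pi.add_apply, Pi.smul_apply, smul_eq_mul, Finset.mul_sum]
      rw [← Finset.sum_add_distrib]
      exact Finset.sum_congr rfl fun x _ => by ring
    rw [h2]
    have h3 := (hV z' (fun j x' => ∑ x, b j x (u j) * K j t z x u x') i).2
      (Set.mem_univ (fun x' => ∑ x, v x (u i) * K i t z x u x'))
      (Set.mem_univ (fun x' => ∑ x, w x (u i) * K i t z x u x')) hp hq hpq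
    simp only [smul_eq_mul] at h3
    calc _ = K0 t z u z' * (p * _ + q * _) := by rw [mul_add]; congr 1 <;> ring
      _ ≤ _ := mul_le_mul_of_nonneg_left h3 (hK0 _ _ _ _)

/-- The value function is concave in each belief separately, being a minimum of multilinear
functions: information is never harmful to the coordinator. -/
lemma value_concave (hK0 : ∀ t z u z', 0 ≤ K0 t z u z') (k t : ℕ) (z : Z) (a : ∀ i, X i → ℝ)
    (i : Fin n) :
    ConcaveOn ℝ Set.univ (fun v => value c K0 K k t z (Function.update a i v)) := by
  induction k generalizing t z a i with
  | zero => exact concaveOn_const _ convex_univ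
  | succ k ih =>
    refine ⟨convex_univ, fun v _ w _ p q hp hq hpq => ?_⟩
    obtain ⟨d, hd⟩ := exists_value_succ_eq c K0 K k t z (Function.update a i (p • v + q • w))
    have hupd : ∀ v : X i → ℝ, (fun j => detJoint (d j) (Function.update a i v j)) =
        Function.update (fun j => detJoint (d j) (a j)) i (detJoint (d i) v) := by
      intro v
      funext j
      by_cases hj : j = i
      · subst hj; simp
      · simp [Function.update_of_ne hj]
    have hlin : detJoint (d i) (p • v + q • w) =
        p • detJoint (d i) v + q • detJoint (d i) w := by
      funext x u
      simp only [detJoint, Pi.add_apply, Pi.smul_apply, smul_eq_mul]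
      split_ifs <;> simp
    have h1 := (stage_concave c K0 K hK0 (fun z a i => ih (t + 1) z a i) t z
      (fun j => detJoint (d j) (a j)) i).2 (Set.mem_univ (detJoint (d i) v))
      (Set.mem_univ (detJoint (d i) w)) hp hq hpq
    have hv := value_succ_le c K0 K k t z (Function.update a i v) d
    have hw := value_succ_le c K0 K k t z (Function.update a i w) d
    rw [hupd] at hd hv hw
    rw [hlin] at hd
    simp only [hd]
    refine le_trans ?_ h1
    simp only [smul_eq_mul]
    exact add_le_add (mul_le_mul_of_nonneg_left hv hp) (mul_le_mul_of_nonneg_left hw hq)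

/-- A nonnegative joint measure is a convex combination of those induced by deterministic
decision rules from the same state marginal; hence a concave function is minimised at one of
the latter. -/
lemma exists_det_le {A B : Type} [Fintype A] [Fintype B] [Nonempty B] (φ : (A → B → ℝ) → ℝ)
    (hφ : ConcaveOn ℝ Set.univ φ) (b : A → B → ℝ) (hb : ∀ x u, 0 ≤ b x u) :
    ∃ d : A → B, φ (detJoint d (fun x => ∑ u, b x u)) ≤ φ b := by
  have hmem : b ∈ convexHull ℝ
      (Set.univ.pi fun x => Set.range fun u : B => fun u' => if u = u' then ∑ u, b x u else 0) := by
    refine mem_convexHull_pi fun x _ => ?_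
    obtain ⟨r, hr⟩ : ∃ r, r = ∑ u, b x u := ⟨_, rfl⟩
    rw [← hr]
    -- If `x` has mass zero, the conditional weights `b x u / r` do not sum to one, but `b x = 0`.
    rcases eq_or_ne r 0 with h0 | h0
    · apply subset_convexHull
      refine ⟨Classical.arbitrary B, ?_⟩
      have := (Finset.sum_eq_zero_iff_of_nonneg (fun u _ => hb x u)).1 (hr.symm.trans h0)
      funext u'
      simp [h0, this u' (Finset.mem_univ _)]
    · have hx : b x = ∑ u, (b x u / r) • (fun u' => if u = u' then r else 0) := by
        funext u'
        simp [Finset.sum_apply, div_mul_cancel₀ _ h0]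
      rw [hx]
      refine (convex_convexHull ℝ _).sum_mem ?_ ?_ ?_
      · exact fun u _ => div_nonneg (hb x u) (hr ▸ Finset.sum_nonneg fun u _ => hb x u)
      · rw [← Finset.sum_div, ← hr, div_self h0]
      · exact fun u _ => subset_convexHull _ _ ⟨u, rfl⟩
  obtain ⟨y, hy, hle⟩ := hφ.exists_le_of_mem_convexHull (Set.subset_univ _) hmem
  choose d hd using fun x => hy x (Set.mem_univ x)
  refine ⟨d, ?_⟩
  have : detJoint d (fun x => ∑ u, b x u) = y := by
    funext x u
    rw [← hd x]
    rfl
  rwa [this]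

/-- No randomised decision rule beats the deterministic ones: `value` bounds the one-step cost of
an arbitrary nonnegative joint measure from below. -/
lemma value_le_stage (hK0 : ∀ t z u z', 0 ≤ K0 t z u z') (k t : ℕ) (z : Z)
    (b : ∀ i, X i → U i → ℝ) (hb : ∀ i x u, 0 ≤ b i x u) :
    value c K0 K (k + 1) t z (fun i x => ∑ u, b i x u) ≤
      stage c K0 K t (value c K0 K k (t + 1)) z b := by
  -- The players are derandomised one at a time; `s` is the set of those already treated.
  have key : ∀ s : Finset (Fin n), ∃ d : ∀ i, X i → U i,
      stage c K0 K t (value c K0 K k (t + 1)) z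
        (fun i => if i ∈ s then detJoint (d i) (fun x => ∑ u, b i x u) else b i) ≤
      stage c K0 K t (value c K0 K k (t + 1)) z b := by
    intro s
    induction s using Finset.induction_on with
    | empty => exact ⟨fun i x => Classical.arbitrary _, by simp⟩
    | insert i s hi ih =>
      obtain ⟨d, hd⟩ := ih
      set b' : ∀ i, X i → U i → ℝ :=
        fun i => if i ∈ s then detJoint (d i) (fun x => ∑ u, b i x u) else b i with hb'
      obtain ⟨e, he⟩ := exists_det_le _ (stage_concave c K0 K hK0
        (fun z a i => value_concave c K0 K hK0 k (t + 1) z a i) t z b' i) (b i) (hb i)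
      refine ⟨Function.update d i e, le_trans (le_of_eq ?_) (he.trans (le_trans (le_of_eq ?_) hd))⟩
      · congr 1
        funext j
        by_cases hj : j = i
        · subst hj; simp
        · simp [hb', hj]
      · congr 1
        funext j
        by_cases hj : j = i
        · subst hj; simp [hb', hi]
        · simp [Function.update_of_ne hj]
  obtain ⟨d, hd⟩ := key Finset.univ
  simp only [Finset.mem_univ, if_true] at hd
  exact (value_succ_le c K0 K k t z _ d).trans hd

end DynamicProgram

/-! ### Factorisation of the law of the histories -/

section HistoryLaw

variable (c : ℕ → Z → (∀ i, X i) → (∀ i, U i) → ℝ)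
variable (PZ : Z → ℝ) (PX : ∀ i, Z → X i → ℝ)
variable (K0 : ℕ → Z → (∀ j, U j) → Z → ℝ)
variable (K : ∀ i, ℕ → Z → X i → (∀ j, U j) → X i → ℝ)
variable (g : Strategy Z X U)

/-- The factor of the law of a history that involves only the shared states. -/
noncomputable def pub : (t : ℕ) → (Fin (t + 1) → Z) → (Fin t → ∀ j, U j) → ℝ
  | 0, zh, _ => PZ (zh 0)
  | t + 1, zh, uh => pub t (Fin.init zh) (Fin.init uh) *
      K0 t (Fin.init zh (Fin.last t)) (uh (Fin.last t)) (zh (Fin.last (t + 1)))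

/-- The factor of the law of a history that involves the local states of subsystem `i`: the
unnormalised conditional law of `X i` up to time `t` given the common information. -/
noncomputable def priv (i : Fin n) :
    (t : ℕ) → (Fin (t + 1) → Z) → (Fin t → ∀ j, U j) → (Fin (t + 1) → X i) → ℝ
  | 0, zh, _, xh => PX i (zh 0) (xh 0)
  | t + 1, zh, uh, xh =>
    if g i t (Fin.init zh) (Fin.init xh) (Fin.init uh) = uh (Fin.last t) i then
      priv i t (Fin.init zh) (Fin.init uh) (Fin.init xh) *
        K i t (Fin.init zh (Fin.last t)) (Fin.init xh (Fin.last t)) (uh (Fin.last t))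
          (xh (Fin.last (t + 1)))
    else 0

/-- The marginal of `priv` at the current local state. -/
noncomputable def marg (i : Fin n) (t : ℕ) (zh : Fin (t + 1) → Z) (uh : Fin t → ∀ j, U j)
    (x : X i) : ℝ :=
  ∑ xh : Fin (t + 1) → X i, if xh (Fin.last t) = x then priv PX K g i t zh uh xh else 0

/-- The unnormalised joint law of the current local state and action of subsystem `i`, given the
common information. -/
noncomputable def joint (i : Fin n) (t : ℕ) (zh : Fin (t + 1) → Z) (uh : Fin t → ∀ j, U j)
    (x : X i) (u : U i) : ℝ :=
  ∑ xh : Fin (t + 1) → X i, if xh (Fin.last t) = x ∧ g i t zh xh uh = u then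
    priv PX K g i t zh uh xh else 0

lemma pub_nonneg (hPZ : ∀ z, 0 ≤ PZ z) (hK0 : ∀ t z u z', 0 ≤ K0 t z u z') (t : ℕ)
    (zh : Fin (t + 1) → Z) (uh : Fin t → ∀ j, U j) : 0 ≤ pub PZ K0 t zh uh := by
  induction t with
  | zero => exact hPZ _
  | succ t ih => exact mul_nonneg (ih _ _) (hK0 _ _ _ _)

lemma priv_nonneg (hPX : ∀ i z x, 0 ≤ PX i z x) (hK : ∀ i t z x u x', 0 ≤ K i t z x u x')
    (i : Fin n) (t : ℕ) (zh : Fin (t + 1) → Z) (uh : Fin t → ∀ j, U j)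
    (xh : Fin (t + 1) → X i) : 0 ≤ priv PX K g i t zh uh xh := by
  induction t with
  | zero => exact hPX _ _ _
  | succ t ih =>
    unfold priv
    split_ifs
    · exact mul_nonneg (ih _ _ _) (hK _ _ _ _ _ _)
    · exact le_rfl

lemma sum_joint (i : Fin n) (t : ℕ) (zh : Fin (t + 1) → Z) (uh : Fin t → ∀ j, U j) (x : X i) :
    ∑ u, joint PX K g i t zh uh x u = marg PX K g i t zh uh x := by
  unfold joint marg
  rw [Finset.sum_comm]
  refine Finset.sum_congr rfl fun xh _ => ?_
  simp [ite_and]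

lemma sum_snoc {A : Type} [Fintype A] (m : ℕ) (F : (Fin (m + 1) → A) → ℝ) :
    ∑ v, F v = ∑ v : Fin m → A, ∑ a, F (Fin.snoc (α := fun _ => A) v a) := by
  rw [← (Fin.snocEquiv (fun _ : Fin (m + 1) => A)).sum_comp, Fintype.sum_prod_type,
    Finset.sum_comm]
  rfl

lemma marg_succ (i : Fin n) (t : ℕ) (zh : Fin (t + 1) → Z) (uh : Fin t → ∀ j, U j) (z' : Z)
    (u : ∀ j, U j) (x' : X i) :
    marg PX K g i (t + 1) (Fin.snoc (α := fun _ => Z) zh z')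
      (Fin.snoc (α := fun _ => ∀ j, U j) uh u) x' =
      ∑ x, joint PX K g i t zh uh x (u i) * K i t (zh (Fin.last t)) x u x' := by
  unfold marg joint
  rw [sum_snoc]
  simp only [priv, Fin.init_snoc, Fin.snoc_last, Finset.sum_mul]
  rw [Finset.sum_comm (s := (Finset.univ : Finset (X i)))]
  refine Finset.sum_congr rfl fun xh _ => ?_
  simp [ite_and]

/-- Pushforward of a product measure by a product map. -/
lemma sum_prod_push {H Y : Fin n → Type} [∀ i, Fintype (H i)] [∀ i, Fintype (Y i)]
    (α : ∀ i, H i → ℝ) (p : ∀ i, H i → Y i) (F : (∀ i, Y i) → ℝ) :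
    ∑ y : ∀ i, Y i, (∏ i, ∑ h, if p i h = y i then α i h else 0) * F y =
      ∑ h : ∀ i, H i, (∏ i, α i (h i)) * F (fun i => p i (h i)) := by
  have : ∀ y : ∀ i, Y i, (∏ i, ∑ h, if p i h = y i then α i h else 0) =
      ∑ h : ∀ i, H i, if (fun i => p i (h i)) = y then ∏ i, α i (h i) else 0 := by
    intro y
    rw [Fintype.prod_sum]
    refine Finset.sum_congr rfl fun h _ => ?_
    rw [Fintype.prod_ite_zero]
    simp only [funext_iff]
    congr
  simp only [this, Finset.sum_mul]
  rw [Finset.sum_comm]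
  refine Finset.sum_congr rfl fun h _ => ?_
  simp

/-- The expected cost at time `t`, computed from the factorised law of the histories. -/
noncomputable def stageCost (t : ℕ) : ℝ :=
  ∑ zh : Fin (t + 1) → Z, ∑ uh : Fin t → ∀ j, U j, pub PZ K0 t zh uh *
    ∑ xh : ∀ i, Fin (t + 1) → X i, (∏ i, priv PX K g i t zh uh (xh i)) *
      c t (zh (Fin.last t)) (fun i => xh i (Fin.last t)) (fun i => g i t zh (xh i) uh)

/-- The expected value, under `g`, of the optimal cost over `k` remaining stages from time `t`. -/
noncomputable def potential (k t : ℕ) : ℝ :=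
  ∑ zh : Fin (t + 1) → Z, ∑ uh : Fin t → ∀ j, U j, pub PZ K0 t zh uh *
    value c K0 K k t (zh (Fin.last t)) (fun i => marg PX K g i t zh uh)

/-- The expected cost at time `t` plus the potential at time `t + 1` is the average over the
common information of the one-step costs of the joint laws of local states and actions. -/
lemma sum_stage (k t : ℕ) :
    ∑ zh : Fin (t + 1) → Z, ∑ uh : Fin t → ∀ j, U j, pub PZ K0 t zh uh *
      stage c K0 K t (value c K0 K k (t + 1)) (zh (Fin.last t))
        (fun i => joint PX K g i t zh uh) =
    stageCost c PZ PX K0 K g t + potential c PZ PX K0 K g k (t + 1) := by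
  have hpot : potential c PZ PX K0 K g k (t + 1) =
      ∑ zh : Fin (t + 1) → Z, ∑ uh : Fin t → ∀ j, U j, ∑ u : ∀ j, U j, ∑ z' : Z,
        pub PZ K0 t zh uh * (K0 t (zh (Fin.last t)) u z' *
          value c K0 K k (t + 1) z' (fun i x' =>
            ∑ x, joint PX K g i t zh uh x (u i) * K i t (zh (Fin.last t)) x u x')) := by
    unfold potential
    rw [sum_snoc]
    refine Finset.sum_congr rfl fun zh _ => ?_
    rw [Finset.sum_comm, sum_snoc]
    refine Finset.sum_congr rfl fun uh _ => Finset.sum_congr rfl fun u _ =>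
      Finset.sum_congr rfl fun z' _ => ?_
    simp only [pub, Fin.init_snoc, Fin.snoc_last, mul_assoc]
    congr 3
    funext i x'
    exact marg_succ PX K g i t zh uh z' u x'
  rw [hpot]
  unfold stageCost
  rw [← Finset.sum_add_distrib]
  refine Finset.sum_congr rfl fun zh _ => ?_
  rw [← Finset.sum_add_distrib]
  refine Finset.sum_congr rfl fun uh _ => ?_
  unfold stage
  rw [mul_add]
  congr 1
  · congr 1
    rw [← sum_prod_push (fun i => priv PX K g i t zh uh)
      (fun i xh => (xh (Fin.last t), g i t zh xh uh))
      (fun y => c t (zh (Fin.last t)) (fun i => (y i).1) (fun i => (y i).2))]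
    simp only [joint, Prod.ext_iff]
  · simp only [Finset.mul_sum]

lemma joint_nonneg (hPX : ∀ i z x, 0 ≤ PX i z x) (hK : ∀ i t z x u x', 0 ≤ K i t z x u x')
    (i : Fin n) (t : ℕ) (zh : Fin (t + 1) → Z) (uh : Fin t → ∀ j, U j) (x : X i) (u : U i) :
    0 ≤ joint PX K g i t zh uh x u :=
  Finset.sum_nonneg fun xh _ => by
    split_ifs
    exacts [priv_nonneg PX K g hPX hK i t zh uh xh, le_rfl]

/-- Bellman inequality for an arbitrary strategy. -/
lemma potential_le (hPZ : ∀ z, 0 ≤ PZ z) (hK0 : ∀ t z u z', 0 ≤ K0 t z u z')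
    (hPX : ∀ i z x, 0 ≤ PX i z x) (hK : ∀ i t z x u x', 0 ≤ K i t z x u x') (k t : ℕ) :
    potential c PZ PX K0 K g (k + 1) t ≤
      stageCost c PZ PX K0 K g t + potential c PZ PX K0 K g k (t + 1) := by
  rw [← sum_stage]
  refine Finset.sum_le_sum fun zh _ => Finset.sum_le_sum fun uh _ =>
    mul_le_mul_of_nonneg_left ?_ (pub_nonneg PZ K0 hPZ hK0 t zh uh)
  have := value_le_stage c K0 K hK0 k t (zh (Fin.last t)) (fun i => joint PX K g i t zh uh)
    (fun i => joint_nonneg PX K g hPX hK i t zh uh)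
  simpa only [sum_joint] using this

/-- The optimal cost bounds the tail cost of every strategy from below. -/
lemma potential_le_sum (hPZ : ∀ z, 0 ≤ PZ z) (hK0 : ∀ t z u z', 0 ≤ K0 t z u z')
    (hPX : ∀ i z x, 0 ≤ PX i z x) (hK : ∀ i t z x u x', 0 ≤ K i t z x u x') (k t : ℕ) :
    potential c PZ PX K0 K g k t ≤
      ∑ s ∈ Finset.range k, stageCost c PZ PX K0 K g (t + s) := by
  induction k generalizing t with
  | zero => simp [potential, value]
  | succ k ih =>
    rw [Finset.sum_range_succ']
    have h1 := potential_le c PZ PX K0 K g hPZ hK0 hPX hK k t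
    have h2 := ih (t + 1)
    have h3 : ∑ s ∈ Finset.range k, stageCost c PZ PX K0 K g (t + (s + 1)) =
        ∑ s ∈ Finset.range k, stageCost c PZ PX K0 K g (t + 1 + s) :=
      Finset.sum_congr rfl fun s _ => by rw [add_assoc, add_comm 1 s]
    rw [h3, add_zero]
    linarith

/-! ### The optimal strategy -/

/-- Normalisation of a measure to a probability law (zero if the measure is zero). -/
noncomputable def normalize {A : Type} [Fintype A] (a : A → ℝ) : A → ℝ := fun x => a x / ∑ y, a y

/-- A minimising profile of decision rules in the dynamic program with horizon `T`. -/
noncomputable def optRule (T t : ℕ) (z : Z) (a : ∀ i, X i → ℝ) : ∀ i, X i → U i :=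
  (exists_value_succ_eq c K0 K (T - (t + 1)) t z a).choose

/-- The unnormalised beliefs generated by the decision rules `optRule`. -/
noncomputable def belief (T : ℕ) :
    (t : ℕ) → (Fin (t + 1) → Z) → (Fin t → ∀ j, U j) → ∀ i, X i → ℝ
  | 0, zh, _ => fun i x => PX i (zh 0) x
  | t + 1, zh, uh => fun i xn =>
    ∑ x, detJoint (optRule c K0 K T t (Fin.init zh (Fin.last t))
        (fun j => normalize (belief T t (Fin.init zh) (Fin.init uh) j)) i)
      (belief T t (Fin.init zh) (Fin.init uh) i) x (uh (Fin.last t) i) *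
      K i t (Fin.init zh (Fin.last t)) x (uh (Fin.last t)) xn

/-- The strategy applying the optimal decision rules to the current normalised beliefs. -/
noncomputable def optStrategy (T : ℕ) : Strategy Z X U := fun i t zh xh uh =>
  optRule c K0 K T t (zh (Fin.last t)) (fun j => normalize (belief c PX K0 K T t zh uh j)) i
    (xh (Fin.last t))

lemma joint_optStrategy (T : ℕ) (i : Fin n) (t : ℕ) (zh : Fin (t + 1) → Z)
    (uh : Fin t → ∀ j, U j) :
    joint PX K (optStrategy c PX K0 K T) i t zh uh =
      detJoint (optRule c K0 K T t (zh (Fin.last t))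
        (fun j => normalize (belief c PX K0 K T t zh uh j)) i)
        (marg PX K (optStrategy c PX K0 K T) i t zh uh) := by
  funext x u
  unfold joint detJoint marg
  split_ifs with h
  · refine Finset.sum_congr rfl fun xh _ => ?_
    by_cases hx : xh (Fin.last t) = x
    · simp [hx, optStrategy, h]
    · simp [hx]
  · refine Finset.sum_eq_zero fun xh _ => ?_
    refine if_neg ?_
    rintro ⟨rfl, hx⟩
    exact h hx

/-- The recursively computed beliefs are the marginals of the law of the histories under the
optimal strategy. -/
lemma marg_optStrategy (T : ℕ) (t : ℕ) (zh : Fin (t + 1) → Z) (uh : Fin t → ∀ j, U j)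
    (i : Fin n) :
    marg PX K (optStrategy c PX K0 K T) i t zh uh = belief c PX K0 K T t zh uh i := by
  induction t generalizing i with
  | zero =>
    funext x
    unfold marg belief
    rw [sum_snoc]
    simp [priv, Fin.snoc]
  | succ t ih =>
    funext x'
    conv_lhs => rw [← Fin.snoc_init_self zh, ← Fin.snoc_init_self uh]
    rw [marg_succ]
    simp only [joint_optStrategy, ih]
    rfl

/-- Bellman equality for the optimal strategy: a minimising profile at the normalised beliefs is
minimising at the unnormalised ones, by homogeneity. -/
lemma potential_opt (hPX : ∀ i z x, 0 ≤ PX i z x) (hK : ∀ i t z x u x', 0 ≤ K i t z x u x')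
    (T k t : ℕ) (hT : T = t + (k + 1)) :
    potential c PZ PX K0 K (optStrategy c PX K0 K T) (k + 1) t =
      stageCost c PZ PX K0 K (optStrategy c PX K0 K T) t +
        potential c PZ PX K0 K (optStrategy c PX K0 K T) k (t + 1) := by
  rw [← sum_stage]
  refine Finset.sum_congr rfl fun zh _ => Finset.sum_congr rfl fun uh _ => congrArg _ ?_
  obtain rfl : k = T - (t + 1) := by omega
  simp only [joint_optStrategy]
  set a : ∀ i, X i → ℝ := fun i => marg PX K (optStrategy c PX K0 K T) i t zh uh with ha
  have hb : (fun j => normalize (belief c PX K0 K T t zh uh j)) = fun j => normalize (a j) := by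
    funext j; rw [ha, ← marg_optStrategy]
  have ha0 : ∀ i x, 0 ≤ a i x := fun i x => Finset.sum_nonneg fun xh _ => by
    split_ifs
    exacts [priv_nonneg PX K _ hPX hK i t zh uh xh, le_rfl]
  have hr : ∀ i, 0 ≤ ∑ x, a i x := fun i => Finset.sum_nonneg fun x _ => ha0 i x
  -- This holds for the zero measure as well, although its normalisation is zero.
  have hsc : ∀ i, a i = fun x => (∑ y, a i y) * normalize (a i) x := by
    intro i
    funext x
    unfold normalize
    rcases eq_or_ne (∑ y, a i y) 0 with h0 | h0
    · rw [h0, zero_mul]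
      exact (Finset.sum_eq_zero_iff_of_nonneg (fun u _ => ha0 i u)).1 h0 x (Finset.mem_univ x)
    · rw [mul_div_cancel₀ _ h0]
  rw [hb]
  have hspec := (exists_value_succ_eq c K0 K (T - (t + 1)) t (zh (Fin.last t))
    (fun j => normalize (a j))).choose_spec
  have hd : (exists_value_succ_eq c K0 K (T - (t + 1)) t (zh (Fin.last t))
      (fun j => normalize (a j))).choose =
      optRule c K0 K T t (zh (Fin.last t)) (fun j => normalize (a j)) := rfl
  calc value c K0 K (T - (t + 1) + 1) t (zh (Fin.last t)) a
      = value c K0 K (T - (t + 1) + 1) t (zh (Fin.last t))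
          (fun i x => (∑ y, a i y) * normalize (a i) x) := by
        congr 1; funext i; exact hsc i
    _ = (∏ i, ∑ y, a i y) * stage c K0 K t (value c K0 K (T - (t + 1)) (t + 1)) (zh (Fin.last t))
          (fun i => detJoint (optRule c K0 K T t (zh (Fin.last t))
            (fun j => normalize (a j)) i) (normalize (a i))) := by
        rw [value_smul c K0 K _ _ _ _ hr, hspec, ← hd]
    _ = _ := by
        rw [← stage_smul c K0 K t _ _ (fun z a' => value_smul c K0 K (T - (t + 1)) (t + 1) z _ hr a')]
        congr 1
        funext i
        rw [← detJoint_mul]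
        congr 1
        exact (hsc i).symm

lemma potential_opt_eq_sum (hPX : ∀ i z x, 0 ≤ PX i z x)
    (hK : ∀ i t z x u x', 0 ≤ K i t z x u x') (T k t : ℕ) (hT : T = t + k) :
    potential c PZ PX K0 K (optStrategy c PX K0 K T) k t =
      ∑ s ∈ Finset.range k, stageCost c PZ PX K0 K (optStrategy c PX K0 K T) (t + s) := by
  induction k generalizing t with
  | zero => simp [potential, value]
  | succ k ih =>
    rw [Finset.sum_range_succ', potential_opt c PZ PX K0 K hPX hK T k t hT,
      ih (t + 1) (by omega)]
    rw [add_zero, add_comm]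
    congr 1
    exact Finset.sum_congr rfl fun s _ => by rw [add_assoc, add_comm 1 s]

/-- At time zero the beliefs, hence the potential, do not depend on the strategy. -/
lemma potential_zero (g' : Strategy Z X U) (k : ℕ) :
    potential c PZ PX K0 K g k 0 = potential c PZ PX K0 K g' k 0 := rfl

end HistoryLaw

/-! ### The law of the histories under a strategy -/

section Probability

variable (PZ : Z → ℝ) (PX : ∀ i, Z → X i → ℝ) (PW0 : W0 → ℝ) (PW : ∀ i, W i → ℝ)
variable (g : Strategy Z X U)

/-- Transition kernel of the shared state. -/
noncomputable def kern0 (t : ℕ) (z : Z) (u : ∀ j, U j) (z' : Z) : ℝ :=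
  ∑ w, if f0 t z u w = z' then PW0 w else 0

/-- Transition kernel of the local state of subsystem `i`. -/
noncomputable def kern (i : Fin n) (t : ℕ) (z : Z) (x : X i) (u : ∀ j, U j) (x' : X i) : ℝ :=
  ∑ w, if f i t z x u w = x' then PW i w else 0

/-- The actions strictly before time `t`. -/
noncomputable def preU (t : ℕ) (ω : Omega T Z X W0 W) : Fin t → ∀ j, U j :=
  Fin.init (traj f0 f g ω t).2.2

lemma Up_eq_s7 (i : Fin n) (t : ℕ) (ω : Omega T Z X W0 W) :
    Up f0 f g i t ω =
      g i t (traj f0 f g ω t).1 ((traj f0 f g ω t).2.1 i) (preU f0 f g t ω) := by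
  cases t with
  | zero =>
    have : preU f0 f g 0 ω = fun s => s.elim0 := funext fun s => s.elim0
    rw [this]
    rfl
  | succ t =>
    simp [Up, preU, traj]

lemma traj_fst_succ (t : ℕ) (ht : t < T) (ω : Omega T Z X W0 W) :
    (traj f0 f g ω (t + 1)).1 = Fin.snoc (α := fun _ => Z) (traj f0 f g ω t).1
      (f0 t ((traj f0 f g ω t).1 (Fin.last t)) ((traj f0 f g ω t).2.2 (Fin.last t))
        (ω.2.2.1 ⟨t, ht⟩)) := by
  simp [traj, ht]

lemma traj_snd_succ (t : ℕ) (ht : t < T) (ω : Omega T Z X W0 W) (i : Fin n) :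
    (traj f0 f g ω (t + 1)).2.1 i = Fin.snoc (α := fun _ => X i) ((traj f0 f g ω t).2.1 i)
      (f i t ((traj f0 f g ω t).1 (Fin.last t)) ((traj f0 f g ω t).2.1 i (Fin.last t))
        ((traj f0 f g ω t).2.2 (Fin.last t)) (ω.2.2.2 i ⟨t, ht⟩)) := by
  simp [traj, ht]

lemma preU_succ (t : ℕ) (ω : Omega T Z X W0 W) :
    preU f0 f g (t + 1) ω = (traj f0 f g ω t).2.2 := by
  simp [preU, traj]

lemma snoc_eq_iff {A : Type} {m : ℕ} (v : Fin m → A) (a : A) (w : Fin (m + 1) → A) :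
    Fin.snoc (α := fun _ => A) v a = w ↔ v = Fin.init w ∧ a = w (Fin.last m) := by
  constructor
  · rintro rfl
    simp
  · rintro ⟨rfl, rfl⟩
    exact Fin.snoc_init_self w

/-- The history up to time `t`, without the actions at time `t`, equals `(zh, xh, uh)`. -/
def IsHist (t : ℕ) (zh : Fin (t + 1) → Z) (xh : ∀ i, Fin (t + 1) → X i)
    (uh : Fin t → ∀ j, U j) (ω : Omega T Z X W0 W) : Prop :=
  (traj f0 f g ω t).1 = zh ∧ (traj f0 f g ω t).2.1 = xh ∧ preU f0 f g t ω = uh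

lemma isHist_succ (t : ℕ) (ht : t < T) (zh : Fin (t + 2) → Z) (xh : ∀ i, Fin (t + 2) → X i)
    (uh : Fin (t + 1) → ∀ j, U j) (ω : Omega T Z X W0 W) :
    IsHist f0 f g (t + 1) zh xh uh ω ↔
      IsHist f0 f g t (Fin.init zh) (fun i => Fin.init (xh i)) (Fin.init uh) ω ∧
      (∀ i, g i t (Fin.init zh) (Fin.init (xh i)) (Fin.init uh) = uh (Fin.last t) i) ∧
      f0 t (Fin.init zh (Fin.last t)) (uh (Fin.last t)) (ω.2.2.1 ⟨t, ht⟩) =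
        zh (Fin.last (t + 1)) ∧
      ∀ i, f i t (Fin.init zh (Fin.last t)) (Fin.init (xh i) (Fin.last t)) (uh (Fin.last t))
        (ω.2.2.2 i ⟨t, ht⟩) = xh i (Fin.last (t + 1)) := by
  have hsn : (traj f0 f g ω t).2.2 =
      Fin.snoc (α := fun _ => ∀ j, U j) (preU f0 f g t ω) (fun j => Up f0 f g j t ω) :=
    (Fin.snoc_init_self _).symm
  have hact : (traj f0 f g ω t).2.2 (Fin.last t) = fun j => Up f0 f g j t ω := rfl
  unfold IsHist
  rw [traj_fst_succ f0 f g t ht, preU_succ, snoc_eq_iff, funext_iff (f := (traj f0 f g ω _).2.1)]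
  simp only [traj_snd_succ f0 f g t ht, snoc_eq_iff]
  rw [hact, hsn, snoc_eq_iff]
  constructor
  · rintro ⟨⟨h1, h2⟩, h3, h4, h5⟩
    have hx : (traj f0 f g ω t).2.1 = fun i => Fin.init (xh i) := funext fun i => (h3 i).1
    refine ⟨⟨h1, hx, h4⟩, fun i => ?_, ?_, fun i => ?_⟩
    · refine Eq.trans ?_ (congrFun h5 i)
      simp only [Up_eq_s7, h1, hx, h4]
    · rw [← h2, h1, h5]
    · rw [← (h3 i).2, h1, h5, hx]
  · rintro ⟨⟨h1, h2, h3⟩, h4, h5, h6⟩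
    have hu : (fun j => Up f0 f g j t ω) = uh (Fin.last t) := by
      funext j
      rw [Up_eq_s7, h1, h2, h3, h4]
    refine ⟨⟨h1, ?_⟩, fun i => ⟨by rw [h2], ?_⟩, h3, hu⟩
    · rw [← h5, h1, hu]
    · rw [← h6, h1, h2, hu]

/-- Replace the noises at time `t`. -/
def updNoise (t : Fin T) (ω : Omega T Z X W0 W) (w : W0 × ∀ i, W i) : Omega T Z X W0 W :=
  (ω.1, ω.2.1, Function.update ω.2.2.1 t w.1, fun i => Function.update (ω.2.2.2 i) t (w.2 i))

lemma traj_updNoise (t : Fin T) (ω : Omega T Z X W0 W) (w : W0 × ∀ i, W i) (s : ℕ)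
    (hs : s ≤ t) : traj f0 f g (updNoise t ω w) s = traj f0 f g ω s := by
  induction s with
  | zero => rfl
  | succ s ih =>
    have hsT : s < T := by omega
    have hne : (⟨s, hsT⟩ : Fin T) ≠ t := fun h => by
      have := congrArg Fin.val h
      simp only at this
      omega
    have h0 : (updNoise t ω w).2.2.1 ⟨s, hsT⟩ = ω.2.2.1 ⟨s, hsT⟩ := by
      simp [updNoise, Function.update_of_ne hne]
    have h1 : ∀ i, (updNoise t ω w).2.2.2 i ⟨s, hsT⟩ = ω.2.2.2 i ⟨s, hsT⟩ := fun i => by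
      simp [updNoise, Function.update_of_ne hne]
    simp only [traj, ih (by omega), hsT, dite_true, h0, h1]

lemma isHist_updNoise (t : Fin T) (ω : Omega T Z X W0 W) (w : W0 × ∀ i, W i)
    (zh : Fin (t.val + 1) → Z) (xh : ∀ i, Fin (t.val + 1) → X i)
    (uh : Fin t.val → ∀ j, U j) :
    IsHist f0 f g t zh xh uh (updNoise t ω w) ↔ IsHist f0 f g t zh xh uh ω := by
  unfold IsHist preU
  rw [traj_updNoise f0 f g t ω w t le_rfl]

/-- Resampling the noises at time `t` independently leaves expectations unchanged: exchanging the
fresh noises with the old ones preserves the product weight. -/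
lemma sum_resample (t : Fin T) (F : Omega T Z X W0 W → ℝ) (hW0 : ∑ w, PW0 w = 1)
    (hW : ∀ i, ∑ w, PW i w = 1) :
    ∑ ω, weight PZ PX PW0 PW ω * F ω =
      ∑ ω, ∑ w : W0 × ∀ i, W i, weight PZ PX PW0 PW ω * (PW0 w.1 * ∏ i, PW i (w.2 i)) *
        F (updNoise t ω w) := by
  have hone : ∑ w : W0 × ∀ i, W i, PW0 w.1 * ∏ i, PW i (w.2 i) = 1 := by
    rw [Fintype.sum_prod_type]
    simp only [← Finset.mul_sum, ← Fintype.prod_sum, hW, Finset.prod_const_one, mul_one, hW0]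
  -- `σ` swaps the noises at time `t` with the fresh ones.
  let σ : Omega T Z X W0 W × (W0 × ∀ i, W i) → Omega T Z X W0 W × (W0 × ∀ i, W i) :=
    fun p => (updNoise t p.1 p.2, (p.1.2.2.1 t, fun i => p.1.2.2.2 i t))
  have hσ : Function.Involutive σ := by
    rintro ⟨⟨z, x, w0, w⟩, v0, v⟩
    simp [σ, updNoise]
  have hupd : ∀ {A : Type} (P : A → ℝ) (v : Fin T → A) (a : A),
      (∏ s, P (Function.update v t a s)) * P (v t) = (∏ s, P (v s)) * P a := by
    intro A P v a
    rw [← Finset.mul_prod_erase _ _ (Finset.mem_univ t),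
      ← Finset.mul_prod_erase Finset.univ (fun s => P (v s)) (Finset.mem_univ t),
      Function.update_self]
    have : ∏ s ∈ Finset.univ.erase t, P (Function.update v t a s) =
        ∏ s ∈ Finset.univ.erase t, P (v s) :=
      Finset.prod_congr rfl fun s hs => by
        rw [Function.update_of_ne (Finset.ne_of_mem_erase hs)]
    rw [this]
    ring
  have hwt : ∀ p : Omega T Z X W0 W × (W0 × ∀ i, W i),
      weight PZ PX PW0 PW (σ p).1 * (PW0 (σ p).2.1 * ∏ i, PW i ((σ p).2.2 i)) =
      weight PZ PX PW0 PW p.1 * (PW0 p.2.1 * ∏ i, PW i (p.2.2 i)) := by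
    rintro ⟨⟨z, x, w0, w⟩, v0, v⟩
    have h0 := hupd PW0 w0 v0
    have h1 : (∏ i, ∏ s, PW i (Function.update (w i) t (v i) s)) * ∏ i, PW i (w i t) =
        (∏ i, ∏ s, PW i (w i s)) * ∏ i, PW i (v i) := by
      rw [← Finset.prod_mul_distrib, ← Finset.prod_mul_distrib]
      exact Finset.prod_congr rfl fun i _ => hupd (PW i) (w i) (v i)
    simp only [σ, updNoise, weight]
    calc _ = PZ z * (∏ i, PX i z (x i)) *
          ((∏ s, PW0 (Function.update w0 t v0 s)) * PW0 (w0 t)) *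
          ((∏ i, ∏ s, PW i (Function.update (w i) t (v i) s)) * ∏ i, PW i (w i t)) := by ring
      _ = _ := by rw [h0, h1]; ring
  calc ∑ ω, weight PZ PX PW0 PW ω * F ω
      = ∑ p : Omega T Z X W0 W × (W0 × ∀ i, W i),
          weight PZ PX PW0 PW p.1 * (PW0 p.2.1 * ∏ i, PW i (p.2.2 i)) * F p.1 := by
        symm
        rw [Fintype.sum_prod_type]
        refine Finset.sum_congr rfl fun ω _ => ?_
        simp only [← Finset.sum_mul, ← Finset.mul_sum, hone, mul_one]
    _ = ∑ p : Omega T Z X W0 W × (W0 × ∀ i, W i),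
          weight PZ PX PW0 PW (σ p).1 * (PW0 (σ p).2.1 * ∏ i, PW i ((σ p).2.2 i)) *
            F (σ p).1 :=
        (Equiv.sum_comp hσ.toPerm fun p : Omega T Z X W0 W × (W0 × ∀ i, W i) =>
          weight PZ PX PW0 PW p.1 * (PW0 p.2.1 * ∏ i, PW i (p.2.2 i)) * F p.1).symm
    _ = _ := by
        simp only [hwt]
        rw [Fintype.sum_prod_type]

/-- The law of the histories factorises: given the common information, the local histories of
the subsystems are independent. -/
lemma law_hist (hW0 : ∑ w, PW0 w = 1) (hW : ∀ i, ∑ w, PW i w = 1) (t : ℕ) (ht : t < T)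
    (zh : Fin (t + 1) → Z) (xh : ∀ i, Fin (t + 1) → X i) (uh : Fin t → ∀ j, U j) :
    ∑ ω : Omega T Z X W0 W,
      weight PZ PX PW0 PW ω * (if IsHist f0 f g t zh xh uh ω then 1 else 0) =
    pub PZ (kern0 f0 PW0) t zh uh * ∏ i, priv PX (kern f PW) g i t zh uh (xh i) := by
  induction t with
  | zero =>
    have hiff : ∀ ω : Omega T Z X W0 W, IsHist f0 f g 0 zh xh uh ω ↔
        ω.1 = zh 0 ∧ ω.2.1 = fun i => xh i 0 := by
      intro ω
      constructor
      · rintro ⟨h1, h2, -⟩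
        exact ⟨congrFun h1 0, funext fun i => congrFun (congrFun h2 i) 0⟩
      · rintro ⟨h1, h2⟩
        refine ⟨funext fun s => ?_, funext fun i => funext fun s => ?_, funext fun s => s.elim0⟩
        · obtain rfl : s = 0 := Fin.ext (by omega)
          exact h1
        · obtain rfl : s = 0 := Fin.ext (by omega)
          exact congrFun h2 i
    have hn0 : ∑ v : Fin T → W0, ∏ s, PW0 (v s) = 1 := by
      rw [← Fintype.prod_sum]; simp [hW0]
    have hn : ∑ v : ∀ i, Fin T → W i, ∏ i, ∏ s, PW i (v i s) = 1 := by
      rw [← Fintype.prod_sum (fun i (v : Fin T → W i) => ∏ s, PW i (v s))]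
      refine Finset.prod_eq_one fun i _ => ?_
      rw [← Fintype.prod_sum]; simp [hW]
    simp only [hiff, ite_and, mul_ite, mul_one, mul_zero]
    rw [Fintype.sum_prod_type, Finset.sum_eq_single (zh 0)]
    · rw [Fintype.sum_prod_type, Finset.sum_eq_single (fun i => xh i 0)]
      · simp only [weight, if_true, Fintype.sum_prod_type, ← Finset.mul_sum, hn, hn0, mul_one]
        rfl
      · intro x _ hx
        simp [hx]
      · simp
    · intro z _ hz
      simp [hz]
    · simp
  | succ t ih =>
    have ht' : t < T := by omega
    rw [sum_resample PZ PX PW0 PW ⟨t, ht'⟩ _ hW0 hW]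
    have hterm : ∀ (ω : Omega T Z X W0 W) (w : W0 × ∀ i, W i),
        (if IsHist f0 f g (t + 1) zh xh uh (updNoise ⟨t, ht'⟩ ω w) then (1 : ℝ) else 0) =
        (if IsHist f0 f g t (Fin.init zh) (fun i => Fin.init (xh i)) (Fin.init uh) ω
          then 1 else 0) *
        (if ∀ i, g i t (Fin.init zh) (Fin.init (xh i)) (Fin.init uh) = uh (Fin.last t) i
          then 1 else 0) *
        (if f0 t (Fin.init zh (Fin.last t)) (uh (Fin.last t)) w.1 = zh (Fin.last (t + 1))
          then 1 else 0) *
        ∏ i, (if f i t (Fin.init zh (Fin.last t)) (Fin.init (xh i) (Fin.last t))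
          (uh (Fin.last t)) (w.2 i) = xh i (Fin.last (t + 1)) then 1 else 0) := by
      intro ω w
      have h1 := isHist_updNoise f0 f g ⟨t, ht'⟩ ω w (Fin.init zh) (fun i => Fin.init (xh i))
        (Fin.init uh)
      simp only at h1
      rw [Fintype.prod_ite_zero]
      simp only [isHist_succ f0 f g t ht', h1, Finset.prod_const_one, ← ite_and, mul_ite, mul_one,
        mul_zero]
      simp only [updNoise, Function.update_self]
      congr 1
      apply propext
      tauto
    simp only [hterm]
    have hfac : ∀ ω : Omega T Z X W0 W, ∑ w : W0 × ∀ i, W i,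
        weight PZ PX PW0 PW ω * (PW0 w.1 * ∏ i, PW i (w.2 i)) *
        ((if IsHist f0 f g t (Fin.init zh) (fun i => Fin.init (xh i)) (Fin.init uh) ω
          then 1 else 0) *
        (if ∀ i, g i t (Fin.init zh) (Fin.init (xh i)) (Fin.init uh) = uh (Fin.last t) i
          then 1 else 0) *
        (if f0 t (Fin.init zh (Fin.last t)) (uh (Fin.last t)) w.1 = zh (Fin.last (t + 1))
          then 1 else 0) *
        ∏ i, (if f i t (Fin.init zh (Fin.last t)) (Fin.init (xh i) (Fin.last t))
          (uh (Fin.last t)) (w.2 i) = xh i (Fin.last (t + 1)) then 1 else 0)) =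
        weight PZ PX PW0 PW ω *
        (if IsHist f0 f g t (Fin.init zh) (fun i => Fin.init (xh i)) (Fin.init uh) ω
          then 1 else 0) *
        ((if ∀ i, g i t (Fin.init zh) (Fin.init (xh i)) (Fin.init uh) = uh (Fin.last t) i
          then 1 else 0) *
        kern0 f0 PW0 t (Fin.init zh (Fin.last t)) (uh (Fin.last t)) (zh (Fin.last (t + 1))) *
        ∏ i, kern f PW i t (Fin.init zh (Fin.last t)) (Fin.init (xh i) (Fin.last t))
          (uh (Fin.last t)) (xh i (Fin.last (t + 1)))) := by
      intro ω
      unfold kern0 kern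
      rw [Fintype.prod_sum, Finset.mul_sum, Finset.mul_sum, Fintype.sum_prod_type,
        Finset.sum_comm]
      refine Finset.sum_congr rfl fun w _ => ?_
      rw [Finset.mul_sum, Finset.sum_mul, Finset.mul_sum]
      refine Finset.sum_congr rfl fun w0 _ => ?_
      have e0 : ∀ (p : Prop) (a : ℝ), (if p then a else 0) = a * if p then 1 else 0 := by
        intro p a; simp
      rw [e0 _ (PW0 w0)]
      have e1 : (∏ i, if f i t (Fin.init zh (Fin.last t)) (Fin.init (xh i) (Fin.last t))
          (uh (Fin.last t)) (w i) = xh i (Fin.last (t + 1)) then PW i (w i) else 0) =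
          (∏ i, PW i (w i)) * ∏ i, if f i t (Fin.init zh (Fin.last t))
          (Fin.init (xh i) (Fin.last t)) (uh (Fin.last t)) (w i) =
            xh i (Fin.last (t + 1)) then 1 else 0 := by
        rw [← Finset.prod_mul_distrib]
        exact Finset.prod_congr rfl fun i _ => e0 _ _
      rw [e1]
      ring
    simp only [hfac]
    rw [← Finset.sum_mul, ih ht']
    simp only [pub, priv]
    rw [Fintype.prod_ite_zero, Finset.prod_mul_distrib]
    split_ifs
    · ring
    · ring

/-- Expectations of functions of the history, computed from the factorised law. -/
lemma expect_hist (hW0 : ∑ w, PW0 w = 1) (hW : ∀ i, ∑ w, PW i w = 1) (t : ℕ) (ht : t < T)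
    (φ : (Fin (t + 1) → Z) → (∀ i, Fin (t + 1) → X i) → (Fin t → ∀ j, U j) → ℝ) :
    ∑ ω : Omega T Z X W0 W, weight PZ PX PW0 PW ω *
      φ (traj f0 f g ω t).1 (traj f0 f g ω t).2.1 (preU f0 f g t ω) =
    ∑ zh, ∑ uh, pub PZ (kern0 f0 PW0) t zh uh *
      ∑ xh, (∏ i, priv PX (kern f PW) g i t zh uh (xh i)) * φ zh xh uh := by
  have h : ∀ zh uh, pub PZ (kern0 f0 PW0) t zh uh *
      ∑ xh, (∏ i, priv PX (kern f PW) g i t zh uh (xh i)) * φ zh xh uh =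
      ∑ xh, ∑ ω : Omega T Z X W0 W, weight PZ PX PW0 PW ω *
        (if IsHist f0 f g t zh xh uh ω then 1 else 0) * φ zh xh uh := by
    intro zh uh
    rw [Finset.mul_sum]
    refine Finset.sum_congr rfl fun xh _ => ?_
    rw [← Finset.sum_mul, law_hist f0 f PZ PX PW0 PW g hW0 hW t ht, mul_assoc]
  simp only [h]
  have h2 : ∀ ω : Omega T Z X W0 W, weight PZ PX PW0 PW ω *
      φ (traj f0 f g ω t).1 (traj f0 f g ω t).2.1 (preU f0 f g t ω) =
      ∑ zh, ∑ uh, ∑ xh, weight PZ PX PW0 PW ω *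
        (if IsHist f0 f g t zh xh uh ω then 1 else 0) * φ zh xh uh := by
    intro ω
    rw [Finset.sum_eq_single (traj f0 f g ω t).1, Finset.sum_eq_single (preU f0 f g t ω),
      Finset.sum_eq_single (traj f0 f g ω t).2.1]
    · simp [IsHist]
    · intro xh _ hx
      simp [IsHist, hx.symm]
    · simp
    · intro uh _ hu
      simp [IsHist, hu.symm]
    · simp
    · intro zh _ hz
      simp [IsHist, hz.symm]
    · simp
  simp only [h2]
  rw [Finset.sum_comm]
  refine Finset.sum_congr rfl fun zh _ => ?_
  rw [Finset.sum_comm]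
  refine Finset.sum_congr rfl fun uh _ => ?_
  rw [Finset.sum_comm]

lemma J_eq_sum (c : ℕ → Z → (∀ i, X i) → (∀ i, U i) → ℝ) (hW0 : ∑ w, PW0 w = 1)
    (hW : ∀ i, ∑ w, PW i w = 1) :
    J f0 f c (weight (T := T) PZ PX PW0 PW) g =
      ∑ t ∈ Finset.range T, stageCost c PZ PX (kern0 f0 PW0) (kern f PW) g t := by
  unfold J
  simp only [Finset.mul_sum]
  rw [Finset.sum_comm]
  refine Finset.sum_congr rfl fun t ht => ?_
  unfold stageCost
  rw [← expect_hist f0 f PZ PX PW0 PW g hW0 hW t (Finset.mem_range.1 ht)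
    (fun zh xh uh => c t (zh (Fin.last t)) (fun i => xh i (Fin.last t))
      (fun i => g i t zh (xh i) uh))]
  simp only [Up_eq_s7]
  rfl

lemma Zp_eq (ω : Omega T Z X W0 W) (t : ℕ) (s : Fin (t + 1)) :
    Zp f0 f g s ω = (traj f0 f g ω t).1 s := by
  induction t with
  | zero =>
    obtain rfl : s = Fin.last 0 := Fin.ext (by simp)
    rfl
  | succ t ih =>
    refine Fin.lastCases rfl (fun s => ?_) s
    have : (traj f0 f g ω (t + 1)).1 s.castSucc = (traj f0 f g ω t).1 s := by
      simp [traj]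
    rw [this, ← ih]
    rfl

lemma Up_eq_preU (ω : Omega T Z X W0 W) (t : ℕ) (s : Fin t) (j : Fin n) :
    Up f0 f g j s ω = preU f0 f g t ω s j := by
  induction t with
  | zero => exact s.elim0
  | succ t ih =>
    rw [preU_succ]
    refine Fin.lastCases rfl (fun s => ?_) s
    exact ih s

/-- The conditioning event in `Theta` is that of equal common information. -/
lemma common_info_iff (t : ℕ) (ω ω' : Omega T Z X W0 W) :
    ((∀ s ≤ t, Zp f0 f g s ω' = Zp f0 f g s ω) ∧
      (∀ s < t, ∀ j, Up f0 f g j s ω' = Up f0 f g j s ω)) ↔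
    (traj f0 f g ω' t).1 = (traj f0 f g ω t).1 ∧ preU f0 f g t ω' = preU f0 f g t ω := by
  constructor
  · rintro ⟨h1, h2⟩
    refine ⟨funext fun s => ?_, funext fun s => funext fun j => ?_⟩
    · rw [← Zp_eq, ← Zp_eq]
      exact h1 s (by omega)
    · rw [← Up_eq_preU, ← Up_eq_preU]
      exact h2 s s.2 j
  · rintro ⟨h1, h2⟩
    refine ⟨fun s hs => ?_, fun s hs j => ?_⟩
    · have h := congrFun h1 ⟨s, by omega⟩
      rwa [← Zp_eq, ← Zp_eq] at h
    · have h := congrFun (congrFun h2 ⟨s, hs⟩) j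
      rwa [← Up_eq_preU, ← Up_eq_preU] at h

/-- The joint probability of the common information and an event on the current local state of
subsystem `i`. -/
lemma prob_common (hW0 : ∑ w, PW0 w = 1) (hW : ∀ i, ∑ w, PW i w = 1) (t : ℕ) (ht : t < T)
    (zh : Fin (t + 1) → Z) (uh : Fin t → ∀ j, U j) (ψ : (∀ i, X i) → ℝ) :
    ∑ ω : Omega T Z X W0 W, weight PZ PX PW0 PW ω *
      (if (traj f0 f g ω t).1 = zh ∧ preU f0 f g t ω = uh then
        ψ (fun i => Xp f0 f g i t ω) else 0) =
    pub PZ (kern0 f0 PW0) t zh uh *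
      ∑ x : ∀ i, X i, (∏ i, marg PX (kern f PW) g i t zh uh (x i)) * ψ x := by
  have h := expect_hist f0 f PZ PX PW0 PW g hW0 hW t ht
    (fun zh' xh uh' => if zh' = zh ∧ uh' = uh then ψ (fun i => xh i (Fin.last t)) else 0)
  refine Eq.trans h ?_
  rw [Finset.sum_eq_single zh, Finset.sum_eq_single uh]
  · congr 1
    simp only [and_self, if_true]
    exact (sum_prod_push (fun i => priv PX (kern f PW) g i t zh uh)
      (fun i xh => xh (Fin.last t)) ψ).symm
  · intro uh' _ hu
    simp [hu]
  · simp
  · intro zh' _ hz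
    simp [hz]
  · simp

lemma weight_nonneg (hPZ : ∀ z, 0 ≤ PZ z) (hPX : ∀ i z x, 0 ≤ PX i z x)
    (hPW0 : ∀ w, 0 ≤ PW0 w) (hPW : ∀ i w, 0 ≤ PW i w) (ω : Omega T Z X W0 W) :
    0 ≤ weight PZ PX PW0 PW ω := by
  unfold weight
  have h1 := Finset.prod_nonneg fun i (_ : i ∈ Finset.univ) => hPX i ω.1 (ω.2.1 i)
  have h2 := Finset.prod_nonneg fun t (_ : t ∈ Finset.univ) => hPW0 (ω.2.2.1 t)
  have h3 := Finset.prod_nonneg fun i (_ : i ∈ Finset.univ) =>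
    Finset.prod_nonneg fun t (_ : t ∈ Finset.univ) => hPW i (ω.2.2.2 i t)
  exact mul_nonneg (mul_nonneg (mul_nonneg (hPZ _) h1) h2) h3

/-- On realisations of positive probability, the belief `Theta` is the normalised marginal of the
factor of subsystem `i`: the other factors cancel. -/
lemma Theta_eq (hPZ : ∀ z, 0 ≤ PZ z) (hPX : ∀ i z x, 0 ≤ PX i z x)
    (hPW0 : ∀ w, 0 ≤ PW0 w) (hPW : ∀ i w, 0 ≤ PW i w)
    (hW0 : ∑ w, PW0 w = 1) (hW : ∀ i, ∑ w, PW i w = 1) (t : ℕ) (ht : t < T)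
    (ω : Omega T Z X W0 W) (hω : weight PZ PX PW0 PW ω ≠ 0) (i : Fin n) :
    Theta f0 f (weight PZ PX PW0 PW) g i t ω =
      normalize (marg PX (kern f PW) g i t (traj f0 f g ω t).1 (preU f0 f g t ω)) := by
  set zh := (traj f0 f g ω t).1 with hzh
  set uh := preU f0 f g t ω with huh
  set a : ∀ j, X j → ℝ := fun j => marg PX (kern f PW) g j t zh uh with ha
  set M := pub PZ (kern0 f0 PW0) t zh uh with hM
  set R := ∏ j ∈ Finset.univ.erase i, ∑ x, a j x with hR
  -- `φ (x i)` is absorbed into the factor of index `i`, so that the sum of products factorises.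
  have hprod : ∀ φ : X i → ℝ, ∑ x : ∀ j, X j, (∏ j, a j (x j)) * φ (x i) =
      (∑ y, a i y * φ y) * R := by
    intro φ
    have h1 : ∀ x : ∀ j, X j, (∏ j, a j (x j)) * φ (x i) =
        ∏ j, a j (x j) * (if h : j = i then φ (h ▸ x j) else 1) := by
      intro x
      rw [Finset.prod_mul_distrib, Finset.prod_eq_single_of_mem i (Finset.mem_univ i)
        (f := fun j => if h : j = i then φ (h ▸ x j) else 1)]
      · simp
      · intro j _ hj
        simp [hj]
    simp only [h1]
    rw [← Fintype.prod_sum (fun j y => a j y * (if h : j = i then φ (h ▸ y) else 1)),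
      ← Finset.mul_prod_erase _ _ (Finset.mem_univ i)]
    congr 1
    · simp
    · refine Finset.prod_congr rfl fun j hj => ?_
      simp [Finset.ne_of_mem_erase hj]
  have hB : Pr (weight PZ PX PW0 PW) (fun ω' : Omega T Z X W0 W =>
      (∀ s ≤ t, Zp f0 f g s ω' = Zp f0 f g s ω) ∧
      (∀ s < t, ∀ j, Up f0 f g j s ω' = Up f0 f g j s ω)) = M * ((∑ y, a i y) * R) := by
    have h := prob_common f0 f PZ PX PW0 PW g hW0 hW t ht zh uh (fun _ => 1)
    have h' := hprod (fun _ => 1)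
    simp only [mul_one] at h h'
    rw [← h', hM, ha, ← h]
    unfold Pr
    refine Finset.sum_congr rfl fun ω' _ => ?_
    simp only [common_info_iff, ← hzh, ← huh]
    split_ifs <;> simp
  have hA : ∀ x, Pr (weight PZ PX PW0 PW) (fun ω' : Omega T Z X W0 W =>
      Xp f0 f g i t ω' = x ∧ (∀ s ≤ t, Zp f0 f g s ω' = Zp f0 f g s ω) ∧
      (∀ s < t, ∀ j, Up f0 f g j s ω' = Up f0 f g j s ω)) = M * (a i x * R) := by
    intro x
    have h := prob_common f0 f PZ PX PW0 PW g hW0 hW t ht zh uh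
      (fun y => if y i = x then 1 else 0)
    have h' := hprod (fun y => if y = x then 1 else 0)
    have h3 : ∑ y, a i y * (if y = x then 1 else 0) = a i x := by simp
    rw [h3] at h'
    rw [← h', hM, ha, ← h]
    unfold Pr
    refine Finset.sum_congr rfl fun ω' _ => ?_
    simp only [common_info_iff, ← hzh, ← huh]
    by_cases hc : (traj f0 f g ω' t).1 = zh ∧ preU f0 f g t ω' = uh <;> simp [hc]
  -- The event of the realised common information contains `ω`, so it has positive probability.
  have hpos : M * ((∑ y, a i y) * R) ≠ 0 := by
    rw [← hB]
    have hw := weight_nonneg (T := T) PZ PX PW0 PW hPZ hPX hPW0 hPW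
    refine ne_of_gt (lt_of_lt_of_le (lt_of_le_of_ne (hw ω) hω.symm) ?_)
    unfold Pr
    refine le_trans (le_of_eq ?_) (Finset.single_le_sum (fun ω' _ => ?_) (Finset.mem_univ ω))
    · simp
    · split_ifs
      exacts [hw ω', le_rfl]
  funext x
  unfold Theta CondPr normalize
  rw [hB, hA]
  have hR0 : M * R ≠ 0 := fun h => hpos (by rw [mul_left_comm, h, mul_zero])
  calc M * (a i x * R) / (M * ((∑ y, a i y) * R))
      = (M * R) * a i x / ((M * R) * ∑ y, a i y) := by ring_nf
    _ = _ := mul_div_mul_left _ _ hR0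

end Probability

/-- Theorem 1, structure of optimal controllers: in the full observation
model, restricting attention to control laws of the form `Uⁱ_t = g̃ⁱ_t(Xⁱ_t, Z_t, Θ_t)`,
where `Θⁱ_t(x) = P(Xⁱ_t = x | Z_{1:t}, U_{1:t-1})`, is without loss of optimality: for every
strategy `g` of the general form there are a strategy `g̃` and functions `h i t` such that
along every trajectory of `g̃` the realized actions satisfy
`Uⁱ_t = h i t (Xⁱ_t, Z_t, Θ_t)`, and `J(g̃) ≤ J(g)`. -/
theorem full_obs_structure_of_optimal_controllers
    (PZ : Z → ℝ) (PX : ∀ i, Z → X i → ℝ) (PW0 : W0 → ℝ) (PW : ∀ i, W i → ℝ)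
    (hPZ : IsLaw PZ) (hPX : ∀ i z, IsLaw (PX i z))
    (hPW0 : IsLaw PW0) (hPW : ∀ i, IsLaw (PW i))
    (c : ℕ → Z → (∀ i, X i) → (∀ i, U i) → ℝ)
    (g : Strategy Z X U) :
    ∃ (gt : Strategy Z X U) (h : ∀ i : Fin n, ℕ → X i → Z → (∀ j, X j → ℝ) → U i),
      (∀ (i : Fin n) (t : ℕ), t < T → ∀ ω : Omega T Z X W0 W,
        weight PZ PX PW0 PW ω ≠ 0 →
          Up f0 f gt i t ω =
            h i t (Xp f0 f gt i t ω) (Zp f0 f gt t ω)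
              (fun j => Theta f0 f (weight PZ PX PW0 PW) gt j t ω)) ∧
      J f0 f c (weight (T := T) PZ PX PW0 PW) gt ≤
        J f0 f c (weight (T := T) PZ PX PW0 PW) g := by
  have hK0 : ∀ t z u z', 0 ≤ kern0 f0 PW0 t z u z' := fun t z u z' =>
    Finset.sum_nonneg fun w _ => by split_ifs; exacts [hPW0.1 w, le_rfl]
  have hK : ∀ i t z x u x', 0 ≤ kern f PW i t z x u x' := fun i t z x u x' =>
    Finset.sum_nonneg fun w _ => by split_ifs; exacts [(hPW i).1 w, le_rfl]
  have hX : ∀ i z x, 0 ≤ PX i z x := fun i z => (hPX i z).1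
  have hW : ∀ i, ∑ w, PW i w = 1 := fun i => (hPW i).2
  refine ⟨optStrategy c PX (kern0 f0 PW0) (kern f PW) T,
    fun i t x z θ => optRule c (kern0 f0 PW0) (kern f PW) T t z θ i x, ?_, ?_⟩
  · intro i t ht ω hω
    rw [Up_eq_s7]
    simp only [Theta_eq f0 f PZ PX PW0 PW _ hPZ.1 hX hPW0.1 (fun i => (hPW i).1) hPW0.2 hW t ht
      ω hω, marg_optStrategy]
    rfl
  · rw [J_eq_sum f0 f PZ PX PW0 PW _ c hPW0.2 hW, J_eq_sum f0 f PZ PX PW0 PW _ c hPW0.2 hW]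
    have h1 := potential_opt_eq_sum c PZ PX (kern0 f0 PW0) (kern f PW) hX hK T T 0
      (zero_add T).symm
    have h2 := potential_le_sum c PZ PX (kern0 f0 PW0) (kern f PW) g hPZ.1 hK0 hX hK T 0
    rw [potential_zero c PZ PX (kern0 f0 PW0) (kern f PW) g
      (optStrategy c PX (kern0 f0 PW0) (kern f PW) T), h1] at h2
    simpa only [zero_add] using h2


end ControlSharing
end
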